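/- Let σ: ℤ → ℂ satisfy the classical Marcinkiewicz condition sup_{ξ∈ℤ}|σ(ξ)| + sup_{j∈ℕ₀} Σ_{2^{j−1} ≤ |ξ| < 2^j} |σ(ξ+1) − σ(ξ)| < ∞. Then the Fourier multiplier Af(x) := Σ_{ξ∈ℤ} e^{2πixξ} σ(ξ) f̂(ξ) extends to a bounded operator from F^r_{p,q}(𝕋) to F^r_{p,q}(𝕋) for all 1 < p, q < ∞ and all r ∈ ℝ, and for p = 1 it extends to a bounded operator from F^r_{1,q}(𝕋) to weak-F^r_{1,q}(𝕋). -/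

import Mathlib

open MeasureTheory ENNReal Real
open scoped NNReal

noncomputable section

/-- The Littlewood–Paley profiles: `ψ_0(λ) = Σ_{j ≤ 0} η(2^{-j} λ)` and
`ψ_ℓ(λ) = η(2^{-ℓ} λ)` for `ℓ ≥ 1`. -/
def lpProfile (η : ℝ → ℝ) (ℓ : ℕ) (lam : ℝ) : ℝ :=
  if ℓ = 0 then ∑' j : {j : ℤ // j ≤ 0}, η ((2 : ℝ) ^ (-(j : ℤ)) * lam)
  else η ((2 : ℝ) ^ (-(ℓ : ℤ)) * lam)

/-- `η ∈ C_0^∞(ℝ⁺, [0,1])`, `η ≠ 0`, `supp η ⊆ [1/2, 2]`,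
and `Σ_{j∈ℤ} η(2^{-j}λ) = 1` for every `λ > 0`. -/
structure IsAdmissibleEta (η : ℝ → ℝ) : Prop where
  smooth : ContDiff ℝ (⊤ : ℕ∞) η
  mem_Icc : ∀ x, η x ∈ Set.Icc (0 : ℝ) 1
  ne_zero : η ≠ 0
  support_subset : Function.support η ⊆ Set.Icc (1/2 : ℝ) 2
  hasSum_one : ∀ lam : ℝ, 0 < lam → HasSum (fun j : ℤ => η ((2 : ℝ) ^ (-j) * lam)) 1

/-- The eigenvalue `⟨ξ⟩ = (1 + 4π²ξ²)^{1/2}` of `B = (1+𝓛)^{1/2}` on the exponential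
`e^{2πixξ}` on the torus `𝕋 = ℝ/ℤ`. -/
def torusEig (ξ : ℤ) : ℝ := Real.sqrt (1 + 4 * π ^ 2 * (ξ : ℝ) ^ 2)

/-- The Fourier multiplier `A f(x) = Σ_{ξ ∈ ℤ} e^{2πixξ} σ(ξ) f̂(ξ)` on the torus. -/
def torusMul (σ : ℤ → ℂ) (f : UnitAddCircle → ℂ) (x : UnitAddCircle) : ℂ :=
  ∑' ξ : ℤ, σ ξ * fourierCoeff f ξ * fourier ξ x

/-- The Littlewood–Paley projection `ψ_ℓ(B)` on the torus, `B = (1+𝓛)^{1/2}`: the Fourier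
multiplier with symbol `ψ_ℓ(⟨ξ⟩)`. -/
def torusLP (η : ℝ → ℝ) (ℓ : ℕ) (f : UnitAddCircle → ℂ) : UnitAddCircle → ℂ :=
  torusMul (fun ξ => (lpProfile η ℓ (torusEig ξ) : ℂ)) f

/-- The pointwise quantity `(Σ_{ℓ≥0} 2^{ℓ r q} |ψ_ℓ(B) f(x)|^q)^{1/q}` on the torus. -/
def torusTlFn (η : ℝ → ℝ) (r q : ℝ) (f : UnitAddCircle → ℂ) (x : UnitAddCircle) : ℝ≥0∞ :=
  (∑' ℓ : ℕ, (ENNReal.ofReal ((2 : ℝ) ^ ((ℓ : ℝ) * r)) * (‖torusLP η ℓ f x‖₊ : ℝ≥0∞)) ^ q)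
    ^ (1/q)

/-- The Triebel–Lizorkin norm `‖f‖_{F^r_{p,q}(𝕋)}`. -/
def torusTlNorm (η : ℝ → ℝ) (r p q : ℝ) (f : UnitAddCircle → ℂ) : ℝ≥0∞ :=
  (∫⁻ x, (torusTlFn η r q f x) ^ p ∂AddCircle.haarAddCircle) ^ (1/p)

/-- The weak Triebel–Lizorkin quasi-norm `‖f‖_{weak-F^r_{1,q}(𝕋)}`. -/
def torusWeakTlNorm (η : ℝ → ℝ) (r q : ℝ) (f : UnitAddCircle → ℂ) : ℝ≥0∞ :=
  ⨆ t : ℝ≥0, (t : ℝ≥0∞) *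
    AddCircle.haarAddCircle {x | (t : ℝ≥0∞) < torusTlFn η r q f x}

/-- The classical Marcinkiewicz condition on `σ : ℤ → ℂ`, with bound `M`:
`sup_{ξ∈ℤ} |σ(ξ)| ≤ M` and `Σ_{2^{j-1} ≤ |ξ| < 2^j} |σ(ξ+1) − σ(ξ)| ≤ M` for all `j ∈ ℕ₀`. -/
def MarcinkiewiczCondition (σ : ℤ → ℂ) (M : ℝ) : Prop :=
  (∀ ξ : ℤ, ‖σ ξ‖ ≤ M) ∧
  ∀ j : ℕ,
    ∑ ξ ∈ (Finset.Icc (-(2 ^ j : ℤ)) (2 ^ j)).filter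
        (fun ξ : ℤ => (2 : ℤ) ^ (j - 1) ≤ |ξ| ∧ |ξ| < (2 : ℤ) ^ j),
      ‖σ (ξ + 1) - σ ξ‖ ≤ M

namespace MTL

def ee (t : ℝ) : ℂ := Complex.exp (2 * π * Complex.I * t)

lemma ee_add (s t : ℝ) : ee (s + t) = ee s * ee t := by
  unfold ee; rw [← Complex.exp_add]; push_cast; ring_nf

lemma ee_int (n : ℤ) : ee n = 1 := by
  unfold ee
  rw [Complex.exp_eq_one_iff]; exact ⟨n, by push_cast; ring⟩

lemma ee_nat_mul (n : ℕ) (t : ℝ) : ee (n * t) = ee t ^ n := by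
  unfold ee; rw [← Complex.exp_nat_mul]; push_cast; ring_nf

lemma norm_ee (t : ℝ) : ‖ee t‖ = 1 := by
  unfold ee
  rw [show (2 * π * Complex.I * t : ℂ) = ((2 * π * t : ℝ) : ℂ) * Complex.I by push_cast; ring]
  exact Complex.norm_exp_ofReal_mul_I _

lemma conj_ee (t : ℝ) : (starRingEnd ℂ) (ee t) = ee (-t) := by
  unfold ee
  rw [← Complex.exp_conj]; congr 1
  simp only [map_mul, Complex.conj_I, Complex.conj_ofReal, map_ofNat]; push_cast; ring

lemma ee_half : ee (1/2) = -1 := by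
  unfold ee
  rw [← Complex.exp_pi_mul_I]; congr 1; push_cast; ring

lemma norm_one_sub_ee (t : ℝ) : ‖1 - ee t‖ = 2 * |Real.sin (π * t)| := by
  have h : ‖1 - ee t‖ = ‖Complex.exp (Complex.I * ((2*π*t : ℝ) : ℂ)) - 1‖ := by
    rw [norm_sub_rev]; unfold ee; congr 3; push_cast; ring
  rw [h, Complex.norm_exp_I_mul_ofReal_sub_one]
  rw [show 2 * π * t / 2 = π * t by ring]
  simp

lemma norm_one_sub_ee_le (t : ℝ) : ‖1 - ee t‖ ≤ 2 * π * |t| := by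
  rw [norm_one_sub_ee]
  have := Real.abs_sin_le_abs (x := π * t)
  rw [abs_mul, abs_of_pos Real.pi_pos] at this
  linarith

lemma norm_one_sub_ee_ge {t : ℝ} (h0 : 0 ≤ t) (h1 : t ≤ 1) : 4 * min t (1 - t) ≤ ‖1 - ee t‖ := by
  rw [norm_one_sub_ee]
  have hp := Real.pi_pos
  rcases le_total t (1/2) with h | h
  · rw [min_eq_left (by linarith)]
    have := Real.mul_le_sin (x := π * t) (by positivity) (by nlinarith)
    have e : 2 / π * (π * t) = 2 * t := by field_simp
    rw [e] at this
    have := le_abs_self (Real.sin (π * t))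
    linarith
  · rw [min_eq_right (by linarith)]
    have := Real.mul_le_sin (x := π * (1 - t)) (by apply mul_nonneg hp.le; linarith) (by nlinarith)
    have e : 2 / π * (π * (1 - t)) = 2 * (1 - t) := by field_simp
    rw [e, show π * (1 - t) = π - π * t by ring, Real.sin_pi_sub] at this
    have := le_abs_self (Real.sin (π * t))
    linarith

/-- kernel as function of the integer difference -/
def kap (N : ℕ) (d : ℝ) : ℂ := (N : ℂ)⁻¹ * ∑ z ∈ Finset.range N, ee (z * ((d + 1/2) / N))

def ker (N : ℕ) (i k : ℕ) : ℂ := kap N ((i : ℝ) - k)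

def SS {E : Type*} [AddCommGroup E] [Module ℂ E] (N : ℕ) (f : ℕ → E) (i : ℕ) : E :=
  ∑ k ∈ Finset.range N, ker N i k • f k

lemma geom_ee (N : ℕ) (t : ℝ) : (1 - ee t) * ∑ z ∈ Finset.range N, ee (z * t) = 1 - ee (N * t) := by
  simp_rw [ee_nat_mul]
  exact mul_neg_geom_sum (ee t) N

lemma ee_int_half (d : ℤ) : ee ((d : ℝ) + 1/2) = -1 := by
  rw [ee_add, ee_int, ee_half, one_mul]

lemma kap_mul (N : ℕ) (hN : 0 < N) (d : ℤ) :
    (1 - ee ((d + 1/2) / N)) * kap N d = 2 / N := by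
  unfold kap
  have h := geom_ee N (((d : ℝ) + 1/2) / N)
  have hN' : (N : ℝ) ≠ 0 := by positivity
  rw [mul_div_cancel₀ _ hN', ee_int_half] at h
  rw [mul_left_comm, h]
  norm_num; ring

lemma kap_periodic (N : ℕ) (hN : 0 < N) (d : ℤ) : kap N ((d : ℝ) + N) = kap N d := by
  unfold kap
  congr 1
  apply Finset.sum_congr rfl
  intro z _
  have hN' : (N : ℝ) ≠ 0 := by positivity
  rw [show (z : ℝ) * (((d : ℝ) + N + 1/2) / N) = z * (((d : ℝ) + 1/2) / N) + ((z : ℤ) : ℝ) by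
    push_cast; field_simp; ring, ee_add, ee_int, mul_one]

lemma kap_diff (N : ℕ) (hN : 0 < N) (d s L : ℕ) (hL : 1 ≤ L) (hs : s < L) (h1 : 2 * L ≤ d) (h2 : d + L < N + 0) :
    ‖kap N ((d : ℝ) - s) - kap N d‖ ≤ 2 * π * L * (1 / (d : ℝ)^2 + 1 / ((N : ℝ) - d)^2) := by
  have hN' : (0 : ℝ) < N := by positivity
  have hs' : (s : ℝ) + 1 ≤ L := by exact_mod_cast hs
  have hL' : (1 : ℝ) ≤ L := by exact_mod_cast hL
  have h1' : (2 : ℝ) * L ≤ d := by exact_mod_cast h1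
  have h2' : (d : ℝ) + L + 1 ≤ N := by exact_mod_cast h2
  have hs0 : (0 : ℝ) ≤ s := by positivity
  have hd0 : (0 : ℝ) < d := by linarith
  have hNd : (0 : ℝ) < N - d := by linarith
  have e1 := kap_mul N hN ((d : ℤ) - s)
  have e2 := kap_mul N hN (d : ℤ)
  push_cast at e1 e2
  set u := ee (((d : ℝ) - s + 1/2) / N) with hu
  set v := ee (((d : ℝ) + 1/2) / N) with hv
  -- lower bound helper
  have low : ∀ θ : ℝ, (d : ℝ)/2 ≤ θ → ((N : ℝ) - d) / 2 ≤ N - θ →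
      2 / N * (min (d : ℝ) (N - d)) ≤ ‖1 - ee (θ / N)‖ := by
    intro θ ha hb
    have hθ0 : 0 ≤ θ / N := by apply div_nonneg _ hN'.le; linarith
    have hθ1 : θ / N ≤ 1 := by rw [div_le_one hN']; linarith
    refine le_trans ?_ (norm_one_sub_ee_ge hθ0 hθ1)
    rw [show 2 / (N : ℝ) * min (d : ℝ) (N - d) = 4 * (min (d : ℝ) (N - d) / 2 / N) by ring]
    gcongr
    apply le_min
    · gcongr
      linarith [min_le_left (d : ℝ) (N - d)]
    · rw [show 1 - θ / N = (N - θ) / N by field_simp]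
      gcongr
      linarith [min_le_right (d : ℝ) (N - d)]
  have lu : 2 / N * (min (d : ℝ) (N - d)) ≤ ‖1 - u‖ := low _ (by linarith) (by linarith)
  have lv : 2 / N * (min (d : ℝ) (N - d)) ≤ ‖1 - v‖ := low _ (by linarith) (by linarith)
  set mm := min (d : ℝ) (N - d) with hmm
  have hm : 0 < mm := lt_min hd0 hNd
  have hpos : 0 < 2 / N * mm := by positivity
  have hu0 : (1 - u) ≠ 0 := by rw [← norm_pos_iff]; linarith
  have hv0 : (1 - v) ≠ 0 := by rw [← norm_pos_iff]; linarith
  have huv : ‖u - v‖ ≤ 2 * π * (L / N) := by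
    have : v = u * ee (s / N) := by
      rw [hu, hv, ← ee_add]; congr 1; field_simp; ring
    rw [this, show u - u * ee (s / N) = u * (1 - ee (s / N)) by ring, norm_mul, hu, norm_ee, one_mul]
    refine (norm_one_sub_ee_le _).trans ?_
    rw [abs_of_nonneg (by positivity)]
    gcongr
  have key : kap N ((d : ℝ) - s) - kap N d = 2 / N * (u - v) / ((1 - u) * (1 - v)) := by
    rw [eq_div_iff (mul_ne_zero hu0 hv0)]
    linear_combination (1 - v) * e1 - (1 - u) * e2
  rw [key, norm_div, norm_mul, norm_mul]
  have hn : ‖(2 : ℂ) / N‖ = 2 / N := by simp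
  rw [hn]
  have hprod : (2 / N * mm) * (2 / N * mm) ≤ ‖1 - u‖ * ‖1 - v‖ := by gcongr
  calc 2 / (N : ℝ) * ‖u - v‖ / (‖1 - u‖ * ‖1 - v‖) ≤ 2 / (N : ℝ) * (2 * π * (L / N)) / ((2 / N * mm) * (2 / N * mm)) := by
        gcongr
    _ = π * L * (1 / mm ^ 2) := by field_simp
    _ ≤ 2 * π * L * (1 / (d : ℝ)^2 + 1 / ((N : ℝ) - d)^2) := by
        have hmx : 1 / mm ^ 2 ≤ 1 / (d : ℝ)^2 + 1 / ((N : ℝ) - d)^2 := by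
          rcases min_choice (d : ℝ) (N - d) with h | h <;> rw [hmm, h]
          · have : 0 ≤ 1 / ((N : ℝ) - d)^2 := by positivity
            linarith
          · have : 0 ≤ 1 / (d : ℝ)^2 := by positivity
            linarith
        have hp := Real.pi_pos
        calc π * L * (1 / mm ^ 2) ≤ π * L * (1 / (d : ℝ)^2 + 1 / ((N : ℝ) - d)^2) := by gcongr
          _ ≤ _ := by
            have : 0 ≤ π * L * (1 / (d : ℝ)^2 + 1 / ((N : ℝ) - d)^2) := by positivity
            linarith

lemma sum_inv_sq (L : ℕ) (hL : 1 ≤ L) (N : ℕ) : ∑ d ∈ Finset.Ico L N, 1 / (d : ℝ)^2 ≤ 2 / (L : ℝ) := by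
  have hL' : (1 : ℝ) ≤ L := by exact_mod_cast hL
  rcases le_or_gt N L with h | h
  · rw [Finset.Ico_eq_empty_of_le h, Finset.sum_empty]; positivity
  have : ∀ n, L ≤ n → ∑ d ∈ Finset.Ico L n, 1 / (d : ℝ)^2 ≤ 2 / (L : ℝ) - 2 / (n : ℝ) := by
    intro n hn
    induction n, hn using Nat.le_induction with
    | base => simp
    | succ n hn ih =>
      rw [Finset.sum_Ico_succ_top hn]
      have hn' : (1 : ℝ) ≤ n := by exact_mod_cast hL.trans hn
      have : 1 / (n : ℝ)^2 ≤ 2 / n - 2 / (n + 1) := by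
        rw [div_sub_div _ _ (by positivity) (by positivity), div_le_div_iff₀ (by positivity) (by positivity)]
        nlinarith [mul_nonneg (sub_nonneg.2 hn') (sq_nonneg (n:ℝ))]
      push_cast; linarith
  have h2 := this N h.le
  have : (0 : ℝ) ≤ 2 / N := by positivity
  linarith

/-- i is far from the block [c, c+L) cyclically -/
def Far (N i c L : ℕ) : Prop := (c + 2 * L ≤ i ∧ i + L < N + c) ∨ (i + L < c ∧ c + 2 * L ≤ i + N)

open Classical in
lemma hormander (N c k L : ℕ) (hck : c ≤ k) (hk : k < c + L) (hN : c + L ≤ N) :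
    ∑ i ∈ (Finset.range N).filter (fun i => Far N i c L), ‖ker N i k - ker N i c‖ ≤ 16 * π := by
  have hL : 1 ≤ L := by omega
  have hN0 : 0 < N := by omega
  have hL' : (1 : ℝ) ≤ L := by exact_mod_cast hL
  obtain ⟨s, rfl⟩ := Nat.exists_eq_add_of_le hck
  have hs : s < L := by omega
  set B : ℕ → ℝ := fun d => 2 * π * L * (1 / (d : ℝ)^2 + 1 / ((N : ℝ) - d)^2) with hB
  have hB0 : ∀ d, 0 ≤ B d := fun d => by have := Real.pi_pos; simp only [hB]; positivity
  have b1 : ∀ i, c + 2 * L ≤ i → i + L < N + c → ‖ker N i (c + s) - ker N i c‖ ≤ B (i - c) := by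
    intro i h1 h2
    have := kap_diff N hN0 (i - c) s L hL hs (by omega) (by omega)
    unfold ker
    rw [Nat.cast_sub (by omega)] at this
    simp only [hB]
    rw [Nat.cast_sub (by omega)]
    push_cast
    rw [show (i : ℝ) - (c + s) = i - c - s by ring]
    exact this
  have b2 : ∀ i, i + L < c → c + 2 * L ≤ i + N → ‖ker N i (c + s) - ker N i c‖ ≤ B (i + N - c) := by
    intro i h1 h2
    have := kap_diff N hN0 (i + N - c) s L hL hs (by omega) (by omega)
    unfold ker
    have p1 := kap_periodic N hN0 ((i : ℤ) - (c + s))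
    have p2 := kap_periodic N hN0 ((i : ℤ) - c)
    push_cast at p1 p2 ⊢
    rw [← p1, ← p2]
    rw [Nat.cast_sub (by omega)] at this
    simp only [hB]
    rw [Nat.cast_sub (by omega)]
    push_cast at this ⊢
    rw [show (i : ℝ) - (c + s) + N = i + N - c - s by ring, show (i : ℝ) - c + N = i + N - c by ring]
    exact this
  have hsumB : ∑ d ∈ Finset.Ico (2 * L) (N - L), B d ≤ 8 * π := by
    simp only [hB]
    rw [← Finset.mul_sum, Finset.sum_add_distrib]
    have s1 : ∑ d ∈ Finset.Ico (2 * L) (N - L), 1 / (d : ℝ)^2 ≤ 2 / (L : ℝ) := by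
      refine le_trans ?_ (sum_inv_sq L hL (N - L))
      apply Finset.sum_le_sum_of_subset_of_nonneg
      · apply Finset.Ico_subset_Ico_left; omega
      · intros; positivity
    have s2 : ∑ d ∈ Finset.Ico (2 * L) (N - L), 1 / ((N : ℝ) - d)^2 ≤ 2 / (L : ℝ) := by
      refine le_trans ?_ (sum_inv_sq L hL N)
      have : ∑ d ∈ Finset.Ico (2 * L) (N - L), 1 / ((N : ℝ) - d)^2 =
          ∑ d ∈ (Finset.Ico (2 * L) (N - L)).image (fun d => N - d), 1 / (d : ℝ)^2 := by
        rw [Finset.sum_image]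
        · apply Finset.sum_congr rfl
          intro d hd
          rw [Finset.mem_Ico] at hd
          rw [Nat.cast_sub (by omega)]
        · intro a ha b hb hab
          simp only [Finset.coe_Ico, Set.mem_Ico] at ha hb
          simp only at hab
          omega
      rw [this]
      apply Finset.sum_le_sum_of_subset_of_nonneg
      · intro d hd
        simp only [Finset.mem_image, Finset.mem_Ico] at hd ⊢
        obtain ⟨a, ha, rfl⟩ := hd
        omega
      · intros; positivity
    have hp := Real.pi_pos
    calc _ ≤ 2 * π * L * (2 / L + 2 / L) := by gcongr
      _ = 8 * π := by field_simp; ring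
  have split : (Finset.range N).filter (fun i => Far N i c L) ⊆
      (Finset.range N).filter (fun i => c + 2 * L ≤ i ∧ i + L < N + c) ∪
      (Finset.range N).filter (fun i => i + L < c ∧ c + 2 * L ≤ i + N) := by
    intro i hi
    rw [Finset.mem_filter] at hi
    obtain ⟨h1, h2⟩ := hi
    unfold Far at h2
    simp only [Finset.mem_filter, Finset.mem_union]
    tauto
  calc _ ≤ ∑ i ∈ ((Finset.range N).filter (fun i => c + 2 * L ≤ i ∧ i + L < N + c) ∪
      (Finset.range N).filter (fun i => i + L < c ∧ c + 2 * L ≤ i + N)), ‖ker N i (c + s) - ker N i c‖ :=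
        Finset.sum_le_sum_of_subset_of_nonneg split (fun _ _ _ => norm_nonneg _)
    _ ≤ ∑ i ∈ (Finset.range N).filter (fun i => c + 2 * L ≤ i ∧ i + L < N + c), ‖ker N i (c + s) - ker N i c‖
      + ∑ i ∈ (Finset.range N).filter (fun i => i + L < c ∧ c + 2 * L ≤ i + N), ‖ker N i (c + s) - ker N i c‖ := by
        rw [← Finset.sum_union_inter]
        have : 0 ≤ ∑ i ∈ ((Finset.range N).filter (fun i => c + 2 * L ≤ i ∧ i + L < N + c) ∩
          (Finset.range N).filter (fun i => i + L < c ∧ c + 2 * L ≤ i + N)), ‖ker N i (c + s) - ker N i c‖ :=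
          Finset.sum_nonneg (fun _ _ => norm_nonneg _)
        linarith
    _ ≤ 8 * π + 8 * π := by
        apply add_le_add
        · refine le_trans (Finset.sum_le_sum (g := fun i => B (i - c)) ?_) (le_trans ?_ hsumB)
          · intro i hi; simp only [Finset.mem_filter] at hi; exact b1 i hi.2.1 hi.2.2
          · rw [← Finset.sum_image (f := B) (g := fun i => i - c)]
            · apply Finset.sum_le_sum_of_subset_of_nonneg
              · intro d hd
                simp only [Finset.mem_image, Finset.mem_filter, Finset.mem_range, Finset.mem_Ico] at hd ⊢
                obtain ⟨a, ha, rfl⟩ := hd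
                omega
              · intros; apply hB0
            · intro a ha b hb hab
              simp only [Finset.coe_filter, Set.mem_ofPred_eq] at ha hb
              simp only at hab
              omega
        · refine le_trans (Finset.sum_le_sum (g := fun i => B (i + N - c)) ?_) (le_trans ?_ hsumB)
          · intro i hi; simp only [Finset.mem_filter] at hi; exact b2 i hi.2.1 hi.2.2
          · rw [← Finset.sum_image (f := B) (g := fun i => i + N - c)]
            · apply Finset.sum_le_sum_of_subset_of_nonneg
              · intro d hd
                simp only [Finset.mem_image, Finset.mem_filter, Finset.mem_range, Finset.mem_Ico] at hd ⊢
                obtain ⟨a, ha, rfl⟩ := hd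
                omega
              · intros; apply hB0
            · intro a ha b hb hab
              simp only [Finset.coe_filter, Set.mem_ofPred_eq, Finset.mem_range] at ha hb
              simp only at hab
              omega
    _ = 16 * π := by ring

/-- orthogonality -/
lemma orth_sum (N : ℕ) (hN : 0 < N) (a b : ℕ) (ha : a < N) (hb : b < N) :
    ∑ i ∈ Finset.range N, ee (i * (((a : ℝ) - b) / N)) = if a = b then (N : ℂ) else 0 := by
  split_ifs with h
  · subst h; simp [ee]
  · have hN' : (0 : ℝ) < N := by positivity
    have g := geom_ee N (((a : ℝ) - b) / N)
    rw [mul_div_cancel₀ _ hN'.ne', show (a : ℝ) - b = ((a - b : ℤ) : ℝ) by push_cast; ring, ee_int, sub_self] at g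
    push_cast at g
    rcases mul_eq_zero.1 g with g | g
    · exfalso
      unfold ee at g
      rw [sub_eq_zero, eq_comm, Complex.exp_eq_one_iff] at g
      obtain ⟨n, hn⟩ := g
      have hpi : (2 * π * Complex.I : ℂ) ≠ 0 := Complex.two_pi_I_ne_zero
      rw [mul_comm, mul_left_inj' hpi] at hn
      have hn2 : ((a : ℝ) - b) / N = n := by exact_mod_cast hn
      rw [div_eq_iff hN'.ne'] at hn2
      have hn3 : (a : ℤ) - b = n * N := by exact_mod_cast hn2
      have : n = 0 := by
        by_contra hne
        rcases lt_or_gt_of_ne hne with h1 | h1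
        · have : n * (N : ℤ) ≤ -1 * N := by gcongr; omega
          omega
        · have : 1 * (N : ℤ) ≤ n * N := by gcongr; omega
          omega
      subst this
      omega
    · exact g

lemma unitary_aux (N : ℕ) (A : ℕ → ℕ → ℂ) 
    (hA : ∀ a b, a < N → b < N → ∑ i ∈ Finset.range N, A i a * (starRingEnd ℂ) (A i b) = if a = b then (N : ℂ) else 0)
    (c : ℕ → ℂ) :
    ∑ i ∈ Finset.range N, ‖∑ a ∈ Finset.range N, A i a * c a‖ ^ 2 = N * ∑ a ∈ Finset.range N, ‖c a‖ ^ 2 := by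
  have : ((∑ i ∈ Finset.range N, ‖∑ a ∈ Finset.range N, A i a * c a‖ ^ 2 : ℝ) : ℂ) =
      ((N * ∑ a ∈ Finset.range N, ‖c a‖ ^ 2 : ℝ) : ℂ) := by
    push_cast
    simp_rw [← Complex.mul_conj']
    simp_rw [map_sum, map_mul, Finset.sum_mul_sum]
    rw [Finset.sum_comm]
    rw [Finset.mul_sum]
    apply Finset.sum_congr rfl
    intro a ha
    rw [Finset.sum_comm]
    have : ∀ b ∈ Finset.range N, ∑ i ∈ Finset.range N, A i a * c a * ((starRingEnd ℂ) (A i b) * (starRingEnd ℂ) (c b))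
        = if a = b then (N : ℂ) * (c a * (starRingEnd ℂ) (c b)) else 0 := by
      intro b hb
      have := hA a b (Finset.mem_range.1 ha) (Finset.mem_range.1 hb)
      calc _ = (∑ i ∈ Finset.range N, A i a * (starRingEnd ℂ) (A i b)) * (c a * (starRingEnd ℂ) (c b)) := by
            rw [Finset.sum_mul]; apply Finset.sum_congr rfl; intros; ring
        _ = _ := by rw [this]; split_ifs <;> simp
    rw [Finset.sum_congr rfl this, Finset.sum_ite_eq, if_pos ha]
  exact_mod_cast this

lemma ker_eq (N : ℕ) (i k : ℕ) : ker N i k = (N : ℂ)⁻¹ * ∑ z ∈ Finset.range N,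
    ee (z * (((i : ℝ) + 1/2) / N)) * ee (-(z * ((k : ℝ) / N))) := by
  unfold ker kap
  congr 1
  apply Finset.sum_congr rfl
  intro z _
  rw [← ee_add]; congr 1; ring

lemma SS_L2 (N : ℕ) (hN : 0 < N) (f : ℕ → ℂ) :
    ∑ i ∈ Finset.range N, ‖SS N f i‖ ^ 2 = ∑ i ∈ Finset.range N, ‖f i‖ ^ 2 := by
  have hN' : (0 : ℝ) < N := by positivity
  have e : ∀ i, SS N f i = (N : ℂ)⁻¹ * ∑ z ∈ Finset.range N, ee (z * (((i : ℝ) + 1/2) / N)) *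
      ∑ k ∈ Finset.range N, ee (-(z * ((k : ℝ) / N))) * f k := by
    intro i
    unfold SS
    simp_rw [ker_eq, smul_eq_mul, Finset.mul_sum, Finset.sum_mul]
    rw [Finset.sum_comm]
    apply Finset.sum_congr rfl; intro z _
    apply Finset.sum_congr rfl; intro k _
    ring
  simp_rw [e, norm_mul, mul_pow]
  rw [← Finset.mul_sum, unitary_aux, unitary_aux]
  · simp only [norm_inv, Complex.norm_natCast]
    field_simp
  · intro a b ha hb
    have := orth_sum N hN b a hb ha
    simp only [eq_comm (a := b)] at this
    rw [← this]
    apply Finset.sum_congr rfl; intro i _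
    rw [conj_ee, ← ee_add]; congr 1; ring
  · intro a b ha hb
    have := orth_sum N hN a b ha hb
    have h2 : ∀ i : ℕ, ee (a * (((i : ℝ) + 1/2) / N)) * (starRingEnd ℂ) (ee (b * (((i : ℝ) + 1/2) / N)))
       = ee (i * (((a : ℝ) - b) / N)) * ee (((a : ℝ) - b) / (2 * N)) := by
      intro i
      rw [conj_ee, ← ee_add, ← ee_add]; congr 1; field_simp; ring
    simp_rw [h2]
    rw [← Finset.sum_mul, this]
    split_ifs with h
    · subst h; simp [ee]
    · simp
end MTL

namespace MTL

/-- block structure on `[a, b)` -/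
structure Blk (F : ℕ → ℝ) (t : ℝ) (a b : ℕ) (c L : ℕ → ℕ) (k : ℕ) : Prop where
  ha : a ≤ c k
  hc : c k ≤ k
  hk : k < c k + L k
  hb : c k + L k ≤ b
  hs : ∀ k', c k ≤ k' → k' < c k + L k → c k' = c k ∧ L k' = L k
  hup : ∑ j ∈ Finset.Ico (c k) (c k + L k), F j ≤ 2 * t * L k
  hlow : L k ≠ 1 → t * L k ≤ ∑ j ∈ Finset.Ico (c k) (c k + L k), F j

lemma Blk.congr {F : ℕ → ℝ} {t : ℝ} {a b a' b' : ℕ} {c L c' L' : ℕ → ℕ} {k : ℕ} 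
    (h : Blk F t a b c L k) (haa : a' ≤ a) (hbb : b ≤ b') 
    (he : ∀ j, a ≤ j → j < b → c' j = c j ∧ L' j = L j) : Blk F t a' b' c' L' k := by
  have h1 := h.ha
  have h2 := h.hc
  have h3 := h.hk
  have h4 := h.hb
  obtain ⟨e1, e2⟩ := he k (by omega) (by omega)
  refine ⟨by omega, by omega, by omega, by omega, ?_, ?_, ?_⟩
  · intro k' hk1 hk2
    rw [e1] at hk1; rw [e1, e2] at hk2
    obtain ⟨e3, e4⟩ := he k' (by omega) (by omega)
    obtain ⟨e5, e6⟩ := h.hs k' hk1 hk2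
    omega
  · rw [e1, e2]; exact h.hup
  · rw [e1, e2]; exact h.hlow

lemma stopping_lem (F : ℕ → ℝ) (hF : ∀ i, 0 ≤ F i) (t : ℝ) (ht : 0 < t) (m : ℕ) : ∀ a, 
    ∑ j ∈ Finset.Ico a (a + 2^m), F j ≤ t * 2^m →
    ∃ c L : ℕ → ℕ, ∀ k, a ≤ k → k < a + 2^m → Blk F t a (a + 2^m) c L k := by
  induction m with
  | zero => 
    intro a h
    simp at h
    refine ⟨id, fun _ => 1, fun k h1 h2 => ?_⟩
    have : k = a := by simp at h2; omega
    subst this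
    refine ⟨le_rfl, le_rfl, by simp, by simp, ?_, ?_, by simp⟩
    · intro k' h1 h2; simp at h1 h2 ⊢; omega
    · simp; linarith
  | succ m ih =>
    have half : ∀ a, ∑ j ∈ Finset.Ico a (a + 2^m), F j ≤ t * 2^(m+1) →
        ∃ c L : ℕ → ℕ, ∀ k, a ≤ k → k < a + 2^m → Blk F t a (a + 2^m) c L k := by
      intro a h
      rcases le_or_gt (∑ j ∈ Finset.Ico a (a + 2^m), F j) (t * 2^m) with h1 | h1
      · exact ih a h1
      · refine ⟨fun _ => a, fun _ => 2^m, fun k hk1 hk2 => ⟨le_rfl, hk1, hk2, le_rfl, ?_, ?_, ?_⟩⟩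
        · intros; exact ⟨rfl, rfl⟩
        · push_cast; rw [pow_succ] at h; linarith
        · intro _; push_cast; exact h1.le
    intro a h
    have e : a + 2^(m+1) = a + 2^m + 2^m := by rw [pow_succ]; ring
    have hsplit := Finset.sum_Ico_consecutive F (Nat.le_add_right a (2^m)) (Nat.le_add_right (a + 2^m) (2^m))
    rw [e] at h
    rw [← hsplit] at h
    have p1 : 0 ≤ ∑ j ∈ Finset.Ico a (a + 2^m), F j := Finset.sum_nonneg (fun _ _ => hF _)
    have p2 : 0 ≤ ∑ j ∈ Finset.Ico (a + 2^m) (a + 2^m + 2^m), F j := Finset.sum_nonneg (fun _ _ => hF _)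
    obtain ⟨c1, L1, H1⟩ := half a (by linarith)
    obtain ⟨c2, L2, H2⟩ := half (a + 2^m) (by linarith)
    refine ⟨fun k => if k < a + 2^m then c1 k else c2 k, fun k => if k < a + 2^m then L1 k else L2 k, ?_⟩
    intro k hk1 hk2
    rw [e] at hk2 ⊢
    rcases lt_or_ge k (a + 2^m) with hk | hk
    · refine (H1 k hk1 hk).congr le_rfl (by omega) ?_
      intro j hj1 hj2
      simp [hj2]
    · refine (H2 k hk hk2).congr (by omega) le_rfl ?_
      intro j hj1 hj2
      simp [not_lt.2 hj1]

/-- average over the block of k -/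
def avg (𝕜 : Type*) [Field 𝕜] {E : Type*} [AddCommGroup E] [Module 𝕜 E] (c L : ℕ → ℕ) (f : ℕ → E) (k : ℕ) : E :=
  (L k : 𝕜)⁻¹ • ∑ j ∈ Finset.Ico (c k) (c k + L k), f j

lemma avg_sum {𝕜 : Type*} [Field 𝕜] [CharZero 𝕜] {E : Type*} [AddCommGroup E] [Module 𝕜 E]
    {F : ℕ → ℝ} {t : ℝ} {N : ℕ} {c L : ℕ → ℕ} (H : ∀ k, k < N → Blk F t 0 N c L k)
    (φ : ℕ → 𝕜) (f : ℕ → E) :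
    ∑ k ∈ Finset.range N, φ (c k) • avg 𝕜 c L f k = ∑ k ∈ Finset.range N, φ (c k) • f k := by
  have e1 : ∀ k ∈ Finset.range N, φ (c k) • avg 𝕜 c L f k =
      ∑ j ∈ Finset.range N, if c k ≤ j ∧ j < c k + L k then (φ (c k) * (L k : 𝕜)⁻¹) • f j else 0 := by
    intro k hk
    have hb := (H k (Finset.mem_range.1 hk)).hb
    unfold avg
    rw [smul_smul, Finset.smul_sum, ← Finset.sum_filter]
    apply Finset.sum_congr _ (fun _ _ => rfl)
    ext j; simp only [Finset.mem_Ico, Finset.mem_filter, Finset.mem_range]; omega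
  rw [Finset.sum_congr rfl e1, Finset.sum_comm]
  apply Finset.sum_congr rfl
  intro j hj
  have B := H j (Finset.mem_range.1 hj)
  have hb := B.hb
  have hc := B.hc
  have hk := B.hk
  have e2 : ∀ k ∈ Finset.range N, (if c k ≤ j ∧ j < c k + L k then (φ (c k) * (L k : 𝕜)⁻¹) • f j else 0) =
     if c j ≤ k ∧ k < c j + L j then (φ (c j) * (L j : 𝕜)⁻¹) • f j else 0 := by
    intro k hk
    have B' := H k (Finset.mem_range.1 hk)
    by_cases h : c j ≤ k ∧ k < c j + L j
    · obtain ⟨h1, h2⟩ := B.hs k h.1 h.2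
      rw [h1, h2, if_pos h, if_pos ⟨hc, B.hk⟩]
    · rw [if_neg h, if_neg]
      intro h'
      obtain ⟨h1, h2⟩ := B'.hs j h'.1 h'.2
      apply h
      rw [h1, h2]; exact ⟨B'.hc, B'.hk⟩
  rw [Finset.sum_congr rfl e2, ← Finset.sum_filter]
  have e3 : (Finset.range N).filter (fun k => c j ≤ k ∧ k < c j + L j) = Finset.Ico (c j) (c j + L j) := by
    ext k; simp only [Finset.mem_Ico, Finset.mem_filter, Finset.mem_range]; omega
  rw [e3, Finset.sum_const, Nat.card_Ico, ← Nat.cast_smul_eq_nsmul 𝕜, smul_smul]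
  congr 1
  have : (L j : 𝕜) ≠ 0 := by
    have : L j ≠ 0 := by omega
    exact_mod_cast this
  rw [show c j + L j - c j = L j by omega]
  field_simp

section
variable {E : Type*} [NormedAddCommGroup E] [NormedSpace ℂ E]

lemma SS_add (N : ℕ) (f g : ℕ → E) (i : ℕ) : SS N (fun k => f k + g k) i = SS N f i + SS N g i := by
  simp [SS, smul_add, Finset.sum_add_distrib]

/-- count bound (Chebyshev) -/
lemma cheb (s : Finset ℕ) (u : ℕ → ℝ) (hu : ∀ i, 0 ≤ u i) (t : ℝ) :
    t * ((s.filter (fun i => t < u i)).card : ℝ) ≤ ∑ i ∈ s, u i := by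
  calc t * ((s.filter (fun i => t < u i)).card : ℝ) = ∑ i ∈ s.filter (fun i => t < u i), t := by
        rw [Finset.sum_const, nsmul_eq_mul, mul_comm]
    _ ≤ ∑ i ∈ s.filter (fun i => t < u i), u i := by
        apply Finset.sum_le_sum; intro i hi; exact (Finset.mem_filter.1 hi).2.le
    _ ≤ ∑ i ∈ s, u i := Finset.sum_le_sum_of_subset_of_nonneg (Finset.filter_subset _ _) (fun _ _ _ => hu _)

open Classical in
theorem cz_weak (q A : ℝ) (hq : 1 ≤ q) (hA : 0 ≤ A) (m : ℕ)
    (HB : ∀ f : ℕ → E, ∑ i ∈ Finset.range (2^m), ‖SS (2^m) f i‖ ^ q ≤ A * ∑ i ∈ Finset.range (2^m), ‖f i‖ ^ q)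
    (f : ℕ → E) (t : ℝ) (ht : 0 < t) :
    t * (((Finset.range (2^m)).filter (fun i => t < ‖SS (2^m) f i‖)).card : ℝ) ≤
      (A * (2:ℝ)^(2*q) + 64 * π + 9 + 1) * ∑ i ∈ Finset.range (2^m), ‖f i‖ := by
  set N := 2^m with hN
  have hN0 : 0 < N := by positivity
  have hsum0 : 0 ≤ ∑ i ∈ Finset.range N, ‖f i‖ := Finset.sum_nonneg (fun _ _ => norm_nonneg _)
  have hp := Real.pi_pos
  have hA2 : 0 ≤ A * (2:ℝ)^(2*q) := by positivity
  rcases lt_or_ge (t * N) (∑ i ∈ Finset.range N, ‖f i‖) with hbig | hsmall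
  · have : (((Finset.range N).filter (fun i => t < ‖SS N f i‖)).card : ℝ) ≤ N := by
      exact_mod_cast (Finset.card_filter_le _ _).trans (by simp)
    nlinarith
  obtain ⟨c, L, H⟩ := stopping_lem (fun i => ‖f i‖) (fun _ => norm_nonneg _) t ht m 0 (by
    rw [Finset.range_eq_Ico] at hsmall
    simpa [hN] using hsmall)
  have H : ∀ k, k < N → Blk (fun i => ‖f i‖) t 0 N c L k := by
    intro k hk
    have := H k (Nat.zero_le _) (by simpa [hN] using hk)
    simpa [hN] using this
  set g : ℕ → E := avg ℂ c L f with hg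
  set b : ℕ → E := fun k => f k - g k with hb
  have Lpos : ∀ k, k < N → (1 : ℝ) ≤ L k := by
    intro k hk
    have h1 := (H k hk).hc
    have h2 := (H k hk).hk
    have : 1 ≤ L k := by omega
    exact_mod_cast this
  have gle : ∀ k, ‖g k‖ ≤ avg ℝ c L (fun i => ‖f i‖) k := by
    intro k
    simp only [hg, avg, norm_smul, smul_eq_mul, norm_inv, Complex.norm_natCast]
    gcongr
    exact norm_sum_le _ _
  have avgle : ∀ k, k < N → avg ℝ c L (fun i => ‖f i‖) k ≤ 2 * t := by
    intro k hk
    have h1 := (H k hk).hup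
    have h2 := Lpos k hk
    simp only [avg, smul_eq_mul]
    rw [inv_mul_le_iff₀ (by linarith)]
    linarith
  have gsum : ∑ k ∈ Finset.range N, ‖g k‖ ≤ ∑ k ∈ Finset.range N, ‖f k‖ := by
    have := avg_sum (𝕜 := ℝ) H (fun _ => 1) (fun i => ‖f i‖)
    simp only [one_smul] at this
    rw [← this]
    exact Finset.sum_le_sum (fun k _ => gle k)
  have bsum : ∑ k ∈ Finset.range N, ‖b k‖ ≤ 2 * ∑ k ∈ Finset.range N, ‖f k‖ := by
    calc _ ≤ ∑ k ∈ Finset.range N, (‖f k‖ + ‖g k‖) := Finset.sum_le_sum (fun k _ => norm_sub_le _ _)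
      _ ≤ _ := by rw [Finset.sum_add_distrib]; linarith
  -- bad set
  set Bad := (Finset.range N).filter (fun k => L k ≠ 1) with hBad
  have badcard : t * (Bad.card : ℝ) ≤ ∑ k ∈ Finset.range N, ‖f k‖ := by
    have Lc : ∀ k, k < N → L (c k) = L k := by
      intro k hk
      have h1 := (H k hk).hc
      have h2 := (H k hk).hk
      exact ((H k hk).hs (c k) le_rfl (by omega)).2
    have := avg_sum (𝕜 := ℝ) H (fun j => if L j ≠ 1 then (1:ℝ) else 0) (fun i => ‖f i‖)
    calc t * (Bad.card : ℝ) = ∑ k ∈ Finset.range N, if L k ≠ 1 then t else 0 := by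
          rw [← Finset.sum_filter, Finset.sum_const, nsmul_eq_mul, mul_comm]
      _ ≤ ∑ k ∈ Finset.range N, (if L (c k) ≠ 1 then (1:ℝ) else 0) • avg ℝ c L (fun i => ‖f i‖) k := by
          apply Finset.sum_le_sum
          intro k hk
          have hk := Finset.mem_range.1 hk
          rw [Lc k hk]
          split_ifs with h
          · rw [one_smul]
            simp only [avg, smul_eq_mul]
            have := (H k hk).hlow h
            have h2 := Lpos k hk
            rw [le_inv_mul_iff₀ (by linarith)]; linarith
          · simp
      _ = _ := this
      _ ≤ _ := by
          apply Finset.sum_le_sum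
          intro k _
          split_ifs <;> simp
  set Om : Finset ℕ := (Finset.range N).filter (fun i : ℕ => ∃ k ∈ Bad, ∃ s ∈ ({-1, 0, 1} : Finset ℤ), ∃ r ∈ ({-1, 0, 1} : Finset ℤ),
    (i : ℤ) = k + s * L k + r * N) with hOm
  have omcard : Om.card ≤ 9 * Bad.card := by
    have : Om.image (fun i : ℕ => (i : ℤ)) ⊆ ((Bad ×ˢ (({-1, 0, 1} : Finset ℤ) ×ˢ ({-1, 0, 1} : Finset ℤ))).image
      (fun x => (x.1 : ℤ) + x.2.1 * L x.1 + x.2.2 * N)) := by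
      intro z hz
      obtain ⟨i, hi, rfl⟩ := Finset.mem_image.1 hz
      obtain ⟨-, k, hk, s, hs, r, hr, e⟩ := Finset.mem_filter.1 hi
      rw [Finset.mem_image]
      exact ⟨(k, s, r), by simp only [Finset.mem_product]; exact ⟨hk, hs, hr⟩, e.symm⟩
    have h1 := Finset.card_le_card this
    rw [Finset.card_image_of_injective _ Nat.cast_injective] at h1
    refine h1.trans (Finset.card_image_le.trans ?_)
    rw [Finset.card_product, Finset.card_product]
    simp; omega
  have far : ∀ i < N, i ∉ Om → ∀ k ∈ Bad, Far N i (c k) (L k) := by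
    intro i hi hio k hk
    have hkN : k < N := Finset.mem_range.1 (Finset.mem_filter.1 hk).1
    have B := H k hkN
    have h1 := B.hc
    have h2 := B.hk
    have h3 := B.hb
    have hnot : ∀ k' : ℤ, ∀ s ∈ ({-1, 0, 1} : Finset ℤ), ∀ r ∈ ({-1, 0, 1} : Finset ℤ), 
       (c k : ℤ) ≤ k' → k' < c k + L k → (i : ℤ) ≠ k' + s * L k + r * N := by
      intro k' s hs r hr ha hb he
      lift k' to ℕ using (by omega)
      obtain ⟨e1, e2⟩ := B.hs k' (by exact_mod_cast ha) (by exact_mod_cast hb)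
      apply hio
      rw [hOm, Finset.mem_filter]
      refine ⟨Finset.mem_range.2 hi, k', ?_, s, hs, r, hr, by rw [e2]; exact he⟩
      rw [hBad, Finset.mem_filter] at hk ⊢
      refine ⟨Finset.mem_range.2 (by omega), by rw [e2]; exact hk.2⟩
    have a1 := hnot i 0 (by simp) 0 (by simp)
    have a2 := hnot (i - L k) 1 (by simp) 0 (by simp)
    have a3 := hnot (i + L k) (-1) (by simp) 0 (by simp)
    have a4 := hnot (i + N) 0 (by simp) (-1) (by simp)
    have a5 := hnot (i + N - L k) 1 (by simp) (-1) (by simp)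
    have a6 := hnot (i + N + L k) (-1) (by simp) (-1) (by simp)
    have a7 := hnot (i - N) 0 (by simp) 1 (by simp)
    have a8 := hnot (i - N - L k) 1 (by simp) 1 (by simp)
    have a9 := hnot (i - N + L k) (-1) (by simp) 1 (by simp)
    unfold Far
    omega
  -- bad part
  have bzero : ∀ k ∈ Finset.range N, k ∉ Bad → b k = 0 := by
    intro k hk hkb
    have hL : L k = 1 := by
      by_contra h
      exact hkb (Finset.mem_filter.2 ⟨hk, h⟩)
    have B := H k (Finset.mem_range.1 hk)
    have h1 := B.hc
    have h2 := B.hk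
    have : c k = k := by omega
    simp only [hb, hg, avg, this, hL]
    simp
  have Sb : ∀ i, SS N b i = ∑ k ∈ Bad, (ker N i k - ker N i (c k)) • b k := by
    intro i
    have h0 : ∑ k ∈ Finset.range N, ker N i (c k) • b k = 0 := by
      simp only [hb, smul_sub, Finset.sum_sub_distrib]
      rw [avg_sum (𝕜 := ℂ) H (fun j => ker N i j) f, sub_self]
    calc SS N b i = ∑ k ∈ Finset.range N, (ker N i k - ker N i (c k)) • b k := by
          simp only [sub_smul, Finset.sum_sub_distrib]
          rw [h0, sub_zero]; rfl
      _ = _ := by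
          symm
          apply Finset.sum_subset (Finset.filter_subset _ _)
          intro k hk hkb
          rw [bzero k hk hkb, smul_zero]
  have badest : ∑ i ∈ (Finset.range N).filter (fun i => i ∉ Om), ‖SS N b i‖ ≤ 32 * π * ∑ k ∈ Finset.range N, ‖f k‖ := by
    calc _ ≤ ∑ i ∈ (Finset.range N).filter (fun i => i ∉ Om), ∑ k ∈ Bad, ‖ker N i k - ker N i (c k)‖ * ‖b k‖ := by
          apply Finset.sum_le_sum
          intro i _
          rw [Sb]
          refine (norm_sum_le _ _).trans (Finset.sum_le_sum ?_)
          intro k _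
          rw [norm_smul]
      _ = ∑ k ∈ Bad, (∑ i ∈ (Finset.range N).filter (fun i => i ∉ Om), ‖ker N i k - ker N i (c k)‖) * ‖b k‖ := by
          rw [Finset.sum_comm]; simp_rw [Finset.sum_mul]
      _ ≤ ∑ k ∈ Bad, 16 * π * ‖b k‖ := by
          apply Finset.sum_le_sum
          intro k hk
          have B := H k (Finset.mem_range.1 (Finset.mem_filter.1 hk).1)
          gcongr
          refine le_trans ?_ (hormander N (c k) k (L k) B.hc B.hk B.hb)
          apply Finset.sum_le_sum_of_subset_of_nonneg
          · intro i hi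
            rw [Finset.mem_filter] at hi ⊢
            exact ⟨hi.1, far i (Finset.mem_range.1 hi.1) hi.2 k hk⟩
          · intros; exact norm_nonneg _
      _ ≤ ∑ k ∈ Finset.range N, 16 * π * ‖b k‖ := by
          apply Finset.sum_le_sum_of_subset_of_nonneg (Finset.filter_subset _ _)
          intros; positivity
      _ ≤ _ := by
          rw [← Finset.mul_sum]
          nlinarith
  -- counting
  set S1 := (Finset.range N).filter (fun i => (t/2)^q < ‖SS N g i‖^q) with hS1
  set S2 := ((Finset.range N).filter (fun i => i ∉ Om)).filter (fun i => t/2 < ‖SS N b i‖) with hS2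
  have cover : (Finset.range N).filter (fun i => t < ‖SS N f i‖) ⊆ S1 ∪ (S2 ∪ Om) := by
    intro i hi
    rw [Finset.mem_filter] at hi
    simp only [Finset.mem_union]
    by_contra hcon
    push Not at hcon
    obtain ⟨h1, h2, h3⟩ := hcon
    have n1 : ‖SS N g i‖ ≤ t/2 := by
      by_contra h
      apply h1
      rw [hS1, Finset.mem_filter]
      exact ⟨hi.1, Real.rpow_lt_rpow (by positivity) (not_le.1 h) (by linarith)⟩
    have n2 : ‖SS N b i‖ ≤ t/2 := by
      by_contra h
      apply h2
      rw [hS2, Finset.mem_filter, Finset.mem_filter]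
      exact ⟨⟨hi.1, h3⟩, not_le.1 h⟩
    have e : SS N f i = SS N g i + SS N b i := by
      rw [← SS_add]; congr 1; ext k; simp [hb]
    have := norm_add_le (SS N g i) (SS N b i)
    rw [← e] at this
    linarith [hi.2]
  have c1 : t * (S1.card : ℝ) ≤ A * (2:ℝ)^(2*q) * ∑ k ∈ Finset.range N, ‖f k‖ := by
    have h1 := cheb (Finset.range N) (fun i => ‖SS N g i‖^q) (fun i => by positivity) ((t/2)^q)
    have h2 : ∑ i ∈ Finset.range N, ‖g i‖^q ≤ (2*t)^(q-1) * ∑ k ∈ Finset.range N, ‖f k‖ := by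
      calc _ ≤ ∑ i ∈ Finset.range N, (2*t)^(q-1) * ‖g i‖ := by
            apply Finset.sum_le_sum
            intro i hi
            have hle := (gle i).trans (avgle i (Finset.mem_range.1 hi))
            rcases (norm_nonneg (g i)).eq_or_lt with h0 | h0
            · rw [← h0, Real.zero_rpow (by linarith)]; simp
            · calc ‖g i‖^q = ‖g i‖^(q-1) * ‖g i‖ := by
                    rw [← Real.rpow_add_one h0.ne']; congr 1; ring
                _ ≤ _ := by gcongr
        _ ≤ _ := by rw [← Finset.mul_sum]; gcongr
    have h3 := h1.trans ((HB g).trans (mul_le_mul_of_nonneg_left h2 hA))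
    have e1 : (t/2)^q = t^(q-1) * t / 2^q := by
      rw [Real.div_rpow ht.le (by norm_num)]
      congr 1
      rw [← Real.rpow_add_one ht.ne']; congr 1; ring
    have e2 : (2*t)^(q-1) = 2^(q-1) * t^(q-1) := Real.mul_rpow (by norm_num) ht.le
    have e3 : (2:ℝ)^(2*q) = 2^(q-1) * 2^q * 2 := by
      rw [← Real.rpow_add (by norm_num), ← Real.rpow_add_one (by norm_num)]; congr 1; ring
    have tp : 0 < t^(q-1) := by positivity
    have t2 : (0:ℝ) < 2^q := by positivity
    have t3 : (0:ℝ) < 2^(q-1) := by positivity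
    rw [← hS1, e1, e2] at h3
    rw [e3]
    have h4 : t * (S1.card : ℝ) ≤ A * (2^(q-1) * 2^q) * ∑ k ∈ Finset.range N, ‖f k‖ := by
      have h5 : t^(q-1) * (t * (S1.card : ℝ)) ≤ t^(q-1) * (A * (2^(q-1) * 2^q) * ∑ k ∈ Finset.range N, ‖f k‖) := by
        have := mul_le_mul_of_nonneg_left h3 t2.le
        calc _ = 2^q * (t^(q-1) * t / 2^q * (S1.card : ℝ)) := by field_simp
          _ ≤ _ := this
          _ = _ := by ring
      exact le_of_mul_le_mul_left h5 tp
    have : 0 ≤ A * (2^(q-1) * 2^q) * ∑ k ∈ Finset.range N, ‖f k‖ := by positivity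
    linarith
  have c2 : t * (S2.card : ℝ) ≤ 64 * π * ∑ k ∈ Finset.range N, ‖f k‖ := by
    have h1 := cheb ((Finset.range N).filter (fun i => i ∉ Om)) (fun i => ‖SS N b i‖) (fun i => norm_nonneg _) (t/2)
    have h2 := h1.trans badest
    rw [← hS2] at h2
    linarith
  have c3 : t * (Om.card : ℝ) ≤ 9 * ∑ k ∈ Finset.range N, ‖f k‖ := by
    have : (Om.card : ℝ) ≤ 9 * Bad.card := by exact_mod_cast omcard
    nlinarith
  have ctot : (((Finset.range N).filter (fun i => t < ‖SS N f i‖)).card : ℝ) ≤ S1.card + (S2.card + Om.card) := by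
    exact_mod_cast (Finset.card_le_card cover).trans ((Finset.card_union_le _ _).trans
      (Nat.add_le_add_left (Finset.card_union_le _ _) _))
  have := mul_le_mul_of_nonneg_left ctot ht.le
  linarith

end
end MTL

namespace MTL

lemma geo1 (s : ℝ) (hs : 0 < s) : ∃ C : ℝ, 0 ≤ C ∧ ∀ (F : Finset ℤ) (b : ℝ), 0 < b →
    ∑ j ∈ F.filter (fun j : ℤ => (2:ℝ)^j ≤ b), ((2:ℝ)^j)^s ≤ C * b^s := by
  set ρ : ℝ := (2:ℝ)^(-s) with hρ
  have hρ0 : 0 ≤ ρ := by positivity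
  have hρ1 : ρ < 1 := Real.rpow_lt_one_of_one_lt_of_neg (by norm_num) (by linarith)
  have h1ρ : 0 < 1 - ρ := by linarith
  refine ⟨(1-ρ)⁻¹, by positivity, fun F b hb => ?_⟩
  obtain ⟨n, hn1, hn2⟩ := exists_mem_Ico_zpow hb (show (1:ℝ) < 2 by norm_num)
  have hj : ∀ j ∈ F.filter (fun j : ℤ => (2:ℝ)^j ≤ b), j ≤ n := by
    intro j hj
    have := (Finset.mem_filter.1 hj).2.trans_lt hn2
    have := (zpow_lt_zpow_iff_right₀ (show (1:ℝ) < 2 by norm_num)).1 this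
    omega
  have e : ∀ j ∈ F.filter (fun j : ℤ => (2:ℝ)^j ≤ b), ((2:ℝ)^j)^s = ((2:ℝ)^n)^s * ρ ^ (n - j).toNat := by
    intro j hjj
    have h := hj j hjj
    have : ((n - j).toNat : ℝ) = (n : ℝ) - j := by
      have : (((n - j).toNat : ℤ) : ℝ) = ((n - j : ℤ) : ℝ) := by rw [Int.toNat_of_nonneg (by omega)]
      push_cast at this; exact this
    rw [← Real.rpow_natCast, this, hρ, ← Real.rpow_intCast, ← Real.rpow_intCast, ← Real.rpow_mul (by norm_num),
      ← Real.rpow_mul (by norm_num), ← Real.rpow_mul (by norm_num), ← Real.rpow_add (by norm_num)]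
    congr 1; ring
  rw [Finset.sum_congr rfl e, ← Finset.mul_sum]
  have h2 : ∑ j ∈ F.filter (fun j : ℤ => (2:ℝ)^j ≤ b), ρ ^ (n - j).toNat ≤ (1-ρ)⁻¹ := by
    rw [← Finset.sum_image (f := fun i : ℕ => ρ^i) (g := fun j : ℤ => (n - j).toNat)]
    · rw [← tsum_geometric_of_lt_one hρ0 hρ1]
      exact (summable_geometric_of_lt_one hρ0 hρ1).sum_le_tsum _ (fun i _ => by positivity)
    · intro a ha c hc hac
      have h1 := hj a ha
      have h2 := hj c hc
      simp only at hac
      omega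
  calc _ ≤ b^s * (1-ρ)⁻¹ := by gcongr
    _ = _ := by ring

lemma geo2 (s : ℝ) (hs : 0 < s) : ∃ C : ℝ, 0 ≤ C ∧ ∀ (F : Finset ℤ) (b : ℝ), 0 < b →
    ∑ j ∈ F.filter (fun j : ℤ => b ≤ (2:ℝ)^j), ((2:ℝ)^j)^(-s) ≤ C * b^(-s) := by
  obtain ⟨C, hC, h⟩ := geo1 s hs
  refine ⟨C, hC, fun F b hb => ?_⟩
  have := h (F.image (fun j => -j)) b⁻¹ (by positivity)
  rw [Real.inv_rpow hb.le, ← Real.rpow_neg hb.le] at this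
  refine le_trans (le_of_eq ?_) this
  rw [Finset.filter_image, Finset.sum_image (fun a _ b _ h => neg_injective h)]
  apply Finset.sum_congr
  · ext j
    simp only [Finset.mem_filter, zpow_neg]
    rw [inv_le_inv₀ (by positivity) hb]
  · intro j _
    rw [zpow_neg, Real.inv_rpow (by positivity), Real.rpow_neg (by positivity)]

theorem interp {E : Type*} [NormedAddCommGroup E] [NormedSpace ℂ E] (p q A W C1 C2 : ℝ) (hp : 1 < p) (hpq : p < q) 
    (hA : 0 ≤ A) (hW : 0 ≤ W) 
    (g1 : ∀ (F : Finset ℤ) (b : ℝ), 0 < b → ∑ j ∈ F.filter (fun j : ℤ => (2:ℝ)^j ≤ b), ((2:ℝ)^j)^(p-1) ≤ C1 * b^(p-1))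
    (g2 : ∀ (F : Finset ℤ) (b : ℝ), 0 < b → ∑ j ∈ F.filter (fun j : ℤ => b ≤ (2:ℝ)^j), ((2:ℝ)^j)^(-(q-p)) ≤ C2 * b^(-(q-p)))
    (N : ℕ)
    (HB : ∀ f : ℕ → E, ∑ i ∈ Finset.range N, ‖SS N f i‖ ^ q ≤ A * ∑ i ∈ Finset.range N, ‖f i‖ ^ q)
    (HW : ∀ (f : ℕ → E) (t : ℝ), 0 < t → t * (((Finset.range N).filter (fun i => t < ‖SS N f i‖)).card : ℝ) ≤
      W * ∑ i ∈ Finset.range N, ‖f i‖)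
    (f : ℕ → E) :
    ∑ i ∈ Finset.range N, ‖SS N f i‖ ^ p ≤ (2^p * (2 * W * C1 + A * 2^q * C2)) * ∑ i ∈ Finset.range N, ‖f i‖ ^ p := by
  have hex : ∀ i, ∃ j : ℤ, 0 < ‖SS N f i‖ → ‖SS N f i‖ ∈ Set.Ioc ((2:ℝ)^j) ((2:ℝ)^(j+1)) := by
    intro i
    by_cases h : 0 < ‖SS N f i‖
    · obtain ⟨j, hj⟩ := exists_mem_Ioc_zpow h (show (1:ℝ) < 2 by norm_num)
      exact ⟨j, fun _ => hj⟩
    · exact ⟨0, fun h' => absurd h' h⟩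
  choose J hJ using hex
  set F := (Finset.range N).image J with hF
  have step1 : ∑ i ∈ Finset.range N, ‖SS N f i‖ ^ p ≤ 2^p * ∑ j ∈ F, ((2:ℝ)^j)^p * 
      (((Finset.range N).filter (fun i => (2:ℝ)^j < ‖SS N f i‖)).card : ℝ) := by
    have : ∀ i ∈ Finset.range N, ‖SS N f i‖ ^ p ≤ ∑ j ∈ F, 2^p * if (2:ℝ)^j < ‖SS N f i‖ then ((2:ℝ)^j)^p else 0 := by
      intro i hi
      rcases (norm_nonneg (SS N f i)).eq_or_lt with h0 | h0
      · rw [← h0, Real.zero_rpow (by linarith)]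
        apply Finset.sum_nonneg; intro j _; split_ifs <;> positivity
      · have hj := hJ i h0
        calc ‖SS N f i‖ ^ p ≤ ((2:ℝ)^(J i + 1))^p := by gcongr; exact hj.2
          _ = 2^p * if (2:ℝ)^(J i) < ‖SS N f i‖ then ((2:ℝ)^(J i))^p else 0 := by
              rw [if_pos hj.1, zpow_add₀ (by norm_num), Real.mul_rpow (by positivity) (by positivity)]
              simp [mul_comm]
          _ ≤ _ := by
              apply Finset.single_le_sum (f := fun j : ℤ => 2^p * if (2:ℝ)^j < ‖SS N f i‖ then ((2:ℝ)^j)^p else 0)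
              · intro j _; split_ifs <;> positivity
              · exact Finset.mem_image_of_mem _ hi
    refine (Finset.sum_le_sum this).trans (le_of_eq ?_)
    rw [Finset.sum_comm, Finset.mul_sum]
    apply Finset.sum_congr rfl
    intro j _
    rw [← Finset.mul_sum, ← Finset.sum_filter, Finset.sum_const, nsmul_eq_mul]
    ring
  have step2 : ∀ j ∈ F, ((2:ℝ)^j)^p * (((Finset.range N).filter (fun i => (2:ℝ)^j < ‖SS N f i‖)).card : ℝ) ≤
      2 * W * ∑ k ∈ Finset.range N, (if (2:ℝ)^j < ‖f k‖ then ((2:ℝ)^j)^(p-1) * ‖f k‖ else 0) + 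
      A * 2^q * ∑ k ∈ Finset.range N, (if (2:ℝ)^j < ‖f k‖ then 0 else ((2:ℝ)^j)^(-(q-p)) * ‖f k‖^q) := by
    intro j _
    set u : ℝ := (2:ℝ)^j with hu
    have hu0 : 0 < u := by positivity
    set f1 : ℕ → E := fun k => if u < ‖f k‖ then f k else 0 with hf1
    set f2 : ℕ → E := fun k => if u < ‖f k‖ then 0 else f k with hf2
    have e : ∀ i, SS N f i = SS N f1 i + SS N f2 i := by
      intro i
      rw [← SS_add]; congr 1; ext k; simp only [hf1, hf2]; split_ifs <;> simp
    have cover : (Finset.range N).filter (fun i => u < ‖SS N f i‖) ⊆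
        (Finset.range N).filter (fun i => u/2 < ‖SS N f1 i‖) ∪ (Finset.range N).filter (fun i => (u/2)^q < ‖SS N f2 i‖^q) := by
      intro i hi
      simp only [Finset.mem_filter, Finset.mem_union] at hi ⊢
      by_contra hcon
      push Not at hcon
      have h1 := hcon.1 hi.1
      have h2 := hcon.2 hi.1
      have h2 := (Real.rpow_le_rpow_iff (norm_nonneg _) (by positivity) (by linarith : 0 < q)).1 h2
      have h3 := norm_add_le (SS N f1 i) (SS N f2 i)
      rw [← e] at h3
      linarith [hi.2]
    have hcard : (((Finset.range N).filter (fun i => u < ‖SS N f i‖)).card : ℝ) ≤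
        ((Finset.range N).filter (fun i => u/2 < ‖SS N f1 i‖)).card + ((Finset.range N).filter (fun i => (u/2)^q < ‖SS N f2 i‖^q)).card := by
      exact_mod_cast (Finset.card_le_card cover).trans (Finset.card_union_le _ _)
    have w1 := HW f1 (u/2) (by positivity)
    have w2 := (cheb (Finset.range N) (fun i => ‖SS N f2 i‖^q) (fun i => by positivity) ((u/2)^q)).trans (HB f2)
    set n1 : ℝ := (((Finset.range N).filter (fun i => u/2 < ‖SS N f1 i‖)).card : ℝ)
    set n2 : ℝ := (((Finset.range N).filter (fun i => (u/2)^q < ‖SS N f2 i‖^q)).card : ℝ)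
    have r1 : ∑ k ∈ Finset.range N, (if u < ‖f k‖ then u^(p-1) * ‖f k‖ else 0) = u^(p-1) * ∑ k ∈ Finset.range N, ‖f1 k‖ := by
      rw [Finset.mul_sum]; apply Finset.sum_congr rfl; intro k _; simp only [hf1]; split_ifs <;> simp
    have r2 : ∑ k ∈ Finset.range N, (if u < ‖f k‖ then 0 else u^(-(q-p)) * ‖f k‖^q) = u^(-(q-p)) * ∑ k ∈ Finset.range N, ‖f2 k‖^q := by
      rw [Finset.mul_sum]; apply Finset.sum_congr rfl; intro k _; simp only [hf2]; split_ifs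
      · simp [Real.zero_rpow (by linarith : q ≠ 0)]
      · rfl
    rw [r1, r2]
    have e1 : u^p = u^(p-1) * u := by rw [← Real.rpow_add_one hu0.ne']; congr 1; ring
    have e2 : u^p = u^(-(q-p)) * (2^q * (u/2)^q) := by
      rw [Real.div_rpow hu0.le (by norm_num), mul_div_cancel₀ _ (by positivity), ← Real.rpow_add hu0]; congr 1; ring
    calc u^p * _ ≤ u^p * (n1 + n2) := by gcongr
      _ = 2 * (u^(p-1) * (u/2 * n1)) + 2^q * (u^(-(q-p)) * ((u/2)^q * n2)) := by
          rw [mul_add]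
          congr 1
          · rw [e1]; ring
          · rw [e2]; ring
      _ ≤ 2 * (u^(p-1) * (W * ∑ k ∈ Finset.range N, ‖f1 k‖)) + 2^q * (u^(-(q-p)) * (A * ∑ k ∈ Finset.range N, ‖f2 k‖^q)) := by
          gcongr
      _ = _ := by ring
  have step3 : ∑ j ∈ F, ∑ k ∈ Finset.range N, (if (2:ℝ)^j < ‖f k‖ then ((2:ℝ)^j)^(p-1) * ‖f k‖ else 0) ≤ C1 * ∑ i ∈ Finset.range N, ‖f i‖ ^ p := by
    rw [Finset.sum_comm, Finset.mul_sum]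
    apply Finset.sum_le_sum
    intro k _
    rcases (norm_nonneg (f k)).eq_or_lt with h0 | h0
    · rw [← h0, Real.zero_rpow (by linarith)]; simp
    · have h1 := g1 F ‖f k‖ h0
      rw [Finset.sum_filter] at h1
      calc _ ≤ (∑ j ∈ F, if (2:ℝ)^j ≤ ‖f k‖ then ((2:ℝ)^j)^(p-1) else 0) * ‖f k‖ := by
            rw [Finset.sum_mul]
            apply Finset.sum_le_sum
            intro j _
            by_cases h : (2:ℝ)^j < ‖f k‖
            · rw [if_pos h, if_pos h.le]
            · rw [if_neg h]; split_ifs <;> positivity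
        _ ≤ C1 * ‖f k‖^(p-1) * ‖f k‖ := by gcongr
        _ = _ := by rw [mul_assoc, ← Real.rpow_add_one h0.ne']; congr 2; ring
  have step4 : ∑ j ∈ F, ∑ k ∈ Finset.range N, (if (2:ℝ)^j < ‖f k‖ then 0 else ((2:ℝ)^j)^(-(q-p)) * ‖f k‖^q) ≤ C2 * ∑ i ∈ Finset.range N, ‖f i‖ ^ p := by
    rw [Finset.sum_comm, Finset.mul_sum]
    apply Finset.sum_le_sum
    intro k _
    rcases (norm_nonneg (f k)).eq_or_lt with h0 | h0
    · rw [← h0, Real.zero_rpow (by linarith), Real.zero_rpow (by linarith)]; simp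
    · have h1 := g2 F ‖f k‖ h0
      rw [Finset.sum_filter] at h1
      calc _ = (∑ j ∈ F, if ‖f k‖ ≤ (2:ℝ)^j then ((2:ℝ)^j)^(-(q-p)) else 0) * ‖f k‖^q := by
            rw [Finset.sum_mul]
            apply Finset.sum_congr rfl
            intro j _
            by_cases h : (2:ℝ)^j < ‖f k‖
            · rw [if_pos h, if_neg (not_le.2 h), zero_mul]
            · rw [if_neg h, if_pos (not_lt.1 h)]
        _ ≤ C2 * ‖f k‖^(-(q-p)) * ‖f k‖^q := by gcongr
        _ = _ := by rw [mul_assoc, ← Real.rpow_add h0]; congr 2; ring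
  calc _ ≤ _ := step1
    _ ≤ 2^p * (2 * W * (C1 * ∑ i ∈ Finset.range N, ‖f i‖ ^ p) + A * 2^q * (C2 * ∑ i ∈ Finset.range N, ‖f i‖ ^ p)) := by
        gcongr
        refine (Finset.sum_le_sum step2).trans ?_
        rw [Finset.sum_add_distrib, ← Finset.mul_sum, ← Finset.mul_sum]
        gcongr
    _ = _ := by ring
end MTL

namespace MTL

def Nq (q : ℝ) {ι : Type} [Fintype ι] (v : ι → ℂ) : ℝ := (∑ a, ‖v a‖^q)^(1/q)

lemma Nq_nonneg (q : ℝ) {ι : Type} [Fintype ι] (v : ι → ℂ) : 0 ≤ Nq q v := by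
  unfold Nq; positivity

lemma Nq_pow {q : ℝ} (hq : 0 < q) {ι : Type} [Fintype ι] (v : ι → ℂ) : Nq q v ^ q = ∑ a, ‖v a‖^q := by
  unfold Nq
  rw [← Real.rpow_mul (by positivity), one_div_mul_cancel hq.ne', Real.rpow_one]

def SB (p q : ℝ) : Prop := ∃ C : ℝ, 0 ≤ C ∧ ∀ (m : ℕ) (ι : Type) [Fintype ι] (f : ℕ → ι → ℂ),
  ∑ i ∈ Finset.range (2^m), Nq q (SS (2^m) f i) ^ p ≤ C * ∑ i ∈ Finset.range (2^m), Nq q (f i) ^ p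

def WB (q : ℝ) : Prop := ∃ C : ℝ, 0 ≤ C ∧ ∀ (m : ℕ) (ι : Type) [Fintype ι] (f : ℕ → ι → ℂ) (t : ℝ), 0 < t →
  t * (((Finset.range (2^m)).filter (fun i => t < Nq q (SS (2^m) f i))).card : ℝ) ≤
    C * ∑ i ∈ Finset.range (2^m), Nq q (f i)

def Scal (q : ℝ) : Prop := ∃ C : ℝ, 0 ≤ C ∧ ∀ (m : ℕ) (f : ℕ → ℂ),
  ∑ i ∈ Finset.range (2^m), ‖SS (2^m) f i‖ ^ q ≤ C * ∑ i ∈ Finset.range (2^m), ‖f i‖ ^ q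

lemma SS_apply {ι : Type} (N : ℕ) (f : ℕ → ι → ℂ) (i : ℕ) (a : ι) : SS N f i a = SS N (fun k => f k a) i := by
  simp [SS, Finset.sum_apply]

lemma scal_two : Scal 2 := by
  refine ⟨1, zero_le_one, fun m f => ?_⟩
  have := SS_L2 (2^m) (by positivity) f
  rw [one_mul]
  exact_mod_cast this.le

lemma SB_of_scal {q : ℝ} (hq : 0 < q) (h : Scal q) : SB q q := by
  obtain ⟨C, hC, h⟩ := h
  refine ⟨C, hC, fun m ι _ f => ?_⟩
  simp_rw [Nq_pow hq]
  rw [Finset.sum_comm, Finset.sum_comm (s := Finset.range (2^m)), Finset.mul_sum]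
  apply Finset.sum_le_sum
  intro a _
  simp_rw [SS_apply]
  exact h m _

lemma scal_of_SB {p q : ℝ} (hq : 0 < q) (h : SB p q) : Scal p := by
  obtain ⟨C, hC, h⟩ := h
  refine ⟨C, hC, fun m f => ?_⟩
  have := h m Unit (fun k _ => f k)
  have e : ∀ v : Unit → ℂ, Nq q v = ‖v ()‖ := by
    intro v
    unfold Nq
    simp only [Finset.univ_unique, Finset.sum_singleton]
    rw [← Real.rpow_mul (by positivity), mul_one_div_cancel hq.ne', Real.rpow_one]
  simp_rw [e, SS_apply] at this
  exact this

lemma exE {q : ℝ} (hq : 1 ≤ q) (ι : Type) [Fintype ι] : ∃ (E : Type) (_ : NormedAddCommGroup E) (_ : NormedSpace ℂ E)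
    (Φ : (ι → ℂ) ≃ₗ[ℂ] E), ∀ v, ‖Φ v‖ = Nq q v := by
  have hf : Fact (1 ≤ ENNReal.ofReal q) := ⟨by simpa using hq⟩
  refine ⟨PiLp (ENNReal.ofReal q) (fun _ : ι => ℂ), inferInstance, inferInstance,
    (WithLp.linearEquiv (ENNReal.ofReal q) ℂ (ι → ℂ)).symm, fun v => ?_⟩
  have h0 : (ENNReal.ofReal q).toReal = q := ENNReal.toReal_ofReal (by linarith)
  rw [PiLp.norm_eq_sum (by rw [h0]; linarith), h0]
  rfl

section trans
variable {ι : Type} [Fintype ι] {E : Type} [NormedAddCommGroup E] [NormedSpace ℂ E] (Φ : (ι → ℂ) ≃ₗ[ℂ] E)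

lemma Phi_SS (N : ℕ) (f : ℕ → ι → ℂ) (i : ℕ) : SS N (fun k => Φ (f k)) i = Φ (SS N f i) := by
  unfold SS
  simp [map_sum]

lemma HB_Phi {q C : ℝ} (hΦ : ∀ v, ‖Φ v‖ = Nq q v) (N : ℕ)
    (h : ∀ f : ℕ → ι → ℂ, ∑ i ∈ Finset.range N, Nq q (SS N f i) ^ q ≤ C * ∑ i ∈ Finset.range N, Nq q (f i) ^ q)
    (f : ℕ → E) :
    ∑ i ∈ Finset.range N, ‖SS N f i‖ ^ q ≤ C * ∑ i ∈ Finset.range N, ‖f i‖ ^ q := by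
  have := h (fun k => Φ.symm (f k))
  simp_rw [← hΦ, ← Phi_SS, LinearEquiv.apply_symm_apply] at this
  exact this
end trans

lemma WB_of_SB {q : ℝ} (hq : 1 ≤ q) (h : SB q q) : WB q := by
  obtain ⟨C, hC, h⟩ := h
  have hp := Real.pi_pos
  refine ⟨C * (2:ℝ)^(2*q) + 64 * π + 9 + 1, by positivity, fun m ι _ f t ht => ?_⟩
  obtain ⟨E, _, _, Φ, hΦ⟩ := exE hq ι
  have := cz_weak q C hq hC m (HB_Phi Φ hΦ (2^m) (h m ι)) (fun k => Φ (f k)) t ht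
  simp only [Phi_SS, hΦ] at this
  refine le_trans (le_of_eq ?_) this
  congr 3

lemma SB_interp {p q : ℝ} (hp : 1 < p) (hpq : p ≤ q) (h : SB q q) : SB p q := by
  rcases hpq.eq_or_lt with rfl | hpq
  · exact h
  have hq : 1 ≤ q := by linarith
  obtain ⟨W, hW, w⟩ := WB_of_SB hq h
  obtain ⟨C, hC, h⟩ := h
  obtain ⟨C1, hC1, g1⟩ := geo1 (p-1) (by linarith)
  obtain ⟨C2, hC2, g2⟩ := geo2 (q-p) (by linarith)
  refine ⟨2^p * (2 * W * C1 + C * 2^q * C2), by positivity, fun m ι _ f => ?_⟩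
  obtain ⟨E, _, _, Φ, hΦ⟩ := exE hq ι
  have := interp p q C W C1 C2 hp hpq hC hW g1 g2 (2^m) (HB_Phi Φ hΦ (2^m) (h m ι)) ?_ (fun k => Φ (f k))
  · simp only [Phi_SS, hΦ] at this
    exact this
  · intro f t ht
    have := w m ι (fun k => Φ.symm (f k)) t ht
    simp only [← hΦ, ← Phi_SS, LinearEquiv.apply_symm_apply] at this
    refine le_trans (le_of_eq ?_) this
    congr 3

lemma ker_rev (N i k : ℕ) (hi : i < N) (hk : k < N) : ker N (N - 1 - k) (N - 1 - i) = ker N i k := by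
  unfold ker
  congr 1
  rw [Nat.sub_sub, Nat.sub_sub, Nat.cast_sub (by omega), Nat.cast_sub (by omega)]
  push_cast; ring

lemma SB_dual {p q p' q' : ℝ} (hp : p.HolderConjugate p') (hq : q.HolderConjugate q') (h : SB p' q') : SB p q := by
  obtain ⟨C, hC, h⟩ := h
  refine ⟨C^(p/p'), by positivity, fun m ι _ f => ?_⟩
  set N := 2^m with hN
  set hh := SS N f with hhh
  have hp1 := hp.lt
  have hq1 := hq.lt
  have hp'0 := hp.symm.pos
  have hq'0 := hq.symm.pos
  have hp0 := hp.pos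
  have hq0 := hq.pos
  set φ : ℕ → ι → ℂ := fun i a => ((Nq q (hh i) ^ (p - q) * ‖hh i a‖^(q-2) : ℝ) : ℂ) * (starRingEnd ℂ) (hh i a) with hφ
  set T : ℕ → ι → ℂ := fun k a => ∑ i ∈ Finset.range N, ker N i k * φ i a with hT
  set X := ∑ i ∈ Finset.range N, Nq q (hh i) ^ p with hX
  set Y := ∑ i ∈ Finset.range N, Nq q (f i) ^ p with hY
  have hX0 : 0 ≤ X := Finset.sum_nonneg (fun i _ => Real.rpow_nonneg (Nq_nonneg _ _) _)
  have hY0 : 0 ≤ Y := Finset.sum_nonneg (fun i _ => Real.rpow_nonneg (Nq_nonneg _ _) _)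
  -- zero case
  have nz : ∀ i, Nq q (hh i) = 0 → ∀ a, hh i a = 0 := by
    intro i hi a
    have := Nq_pow hq0 (hh i)
    rw [hi, Real.zero_rpow hq0.ne', eq_comm, Finset.sum_eq_zero_iff_of_nonneg (fun _ _ => by positivity)] at this
    have := this a (Finset.mem_univ _)
    rw [Real.rpow_eq_zero (norm_nonneg _) hq0.ne'] at this
    exact norm_eq_zero.1 this
  have pair : ∀ i, ∑ a, hh i a * φ i a = ((Nq q (hh i) ^ p : ℝ) : ℂ) := by
    intro i
    have e1 : ∀ a, hh i a * φ i a = ((Nq q (hh i) ^ (p - q) * ‖hh i a‖^q : ℝ) : ℂ) := by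
      intro a
      simp only [hφ]
      rw [mul_left_comm, Complex.mul_conj']
      rcases (norm_nonneg (hh i a)).eq_or_lt with h0 | h0
      · rw [← h0, Real.zero_rpow hq0.ne']; simp
      · have : ‖hh i a‖^q = ‖hh i a‖^(q-2) * ‖hh i a‖^2 := by
          rw [← Real.rpow_natCast, ← Real.rpow_add h0]; congr 1; push_cast; ring
        rw [this]; push_cast; ring
    rw [Finset.sum_congr rfl (fun a _ => e1 a), ← Complex.ofReal_sum, ← Finset.mul_sum, ← Nq_pow hq0]
    congr 1
    rcases (Nq_nonneg q (hh i)).eq_or_lt with h0 | h0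
    · rw [← h0, Real.zero_rpow hq0.ne', Real.zero_rpow hp0.ne', mul_zero]
    · rw [← Real.rpow_add h0]; congr 1; ring
  have nphi : ∀ i, Nq q' (φ i) = Nq q (hh i) ^ (p - 1) := by
    intro i
    rcases (Nq_nonneg q (hh i)).eq_or_lt with h0 | h0
    · rw [← h0, Real.zero_rpow (by linarith)]
      have := nz i h0.symm
      unfold Nq
      simp only [hφ, this]
      simp [Real.zero_rpow hq'0.ne', Real.zero_rpow (inv_pos.2 hq'0).ne']
    · have e1 : ∀ a, ‖φ i a‖^q' = (Nq q (hh i) ^ (p - q))^q' * ‖hh i a‖^q := by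
        intro a
        simp only [hφ]
        rw [norm_mul, RCLike.norm_conj, Complex.norm_real, Real.norm_of_nonneg (by positivity)]
        rcases (norm_nonneg (hh i a)).eq_or_lt with h1 | h1
        · rw [← h1, Real.zero_rpow hq0.ne']; simp [Real.zero_rpow hq'0.ne']
        · rw [mul_assoc, ← Real.rpow_add_one h1.ne', Real.mul_rpow (by positivity) (by positivity),
            ← Real.rpow_mul h1.le]
          congr 2
          have := hq.mul_eq_add
          nlinarith
      rw [show Nq q' (φ i) = (∑ a, ‖φ i a‖^q')^(1/q') from rfl,
        Finset.sum_congr rfl (fun a _ => e1 a), ← Finset.mul_sum, ← Nq_pow hq0]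
      clear e1
      generalize Nq q (hh i) = n at h0 ⊢
      rw [← Real.rpow_mul h0.le, ← Real.rpow_add h0, ← Real.rpow_mul h0.le]
      congr 1
      have := hq.mul_eq_add
      field_simp
      nlinarith
  have XT : (X : ℂ) = ∑ k ∈ Finset.range N, ∑ a, f k a * T k a := by
    rw [hX, Complex.ofReal_sum, ← Finset.sum_congr rfl (fun i _ => pair i)]
    simp only [hhh, SS_apply, hT]
    simp only [SS, smul_eq_mul, Finset.sum_mul, Finset.mul_sum]
    rw [Finset.sum_comm]
    rw [Finset.sum_comm (s := Finset.range N)]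
    apply Finset.sum_congr rfl; intro a _
    rw [Finset.sum_comm]
    apply Finset.sum_congr rfl; intro k _
    apply Finset.sum_congr rfl; intro i _
    ring
  have Tn : ∑ k ∈ Finset.range N, Nq q' (T k) ^ p' ≤ C * X := by
    have h1 := h m ι (fun j => φ (N - 1 - j))
    rw [← hN] at h1
    have e1 : ∀ k ∈ Finset.range N, T k = SS N (fun j => φ (N - 1 - j)) (N - 1 - k) := by
      intro k hk
      ext a
      rw [SS_apply]
      simp only [hT, SS, smul_eq_mul]
      rw [← Finset.sum_range_reflect]
      apply Finset.sum_congr rfl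
      intro j hj
      rw [Finset.mem_range] at hk hj
      rw [← ker_rev N (N-1-j) k (by omega) hk, show N - 1 - (N - 1 - j) = j by omega]
    rw [Finset.sum_congr rfl (fun k hk => by rw [e1 k hk]),
      Finset.sum_range_reflect (fun k => Nq q' (SS N (fun j => φ (N - 1 - j)) k) ^ p')]
    refine h1.trans (le_of_eq ?_)
    rw [Finset.sum_range_reflect (fun k => Nq q' (φ k) ^ p'), hX]
    congr 1
    apply Finset.sum_congr rfl
    intro i _
    rw [nphi, ← Real.rpow_mul (Nq_nonneg _ _)]
    congr 1
    have := hp.mul_eq_add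
    nlinarith
  have hol : X ≤ Y^(1/p) * (C * X)^(1/p') := by
    have a1 : X ≤ ∑ k ∈ Finset.range N, Nq q (f k) * Nq q' (T k) := by
      have : X = ‖(X : ℂ)‖ := by rw [Complex.norm_real, Real.norm_of_nonneg hX0]
      rw [this, XT]
      refine (norm_sum_le _ _).trans (Finset.sum_le_sum fun k _ => ?_)
      refine (norm_sum_le _ _).trans ?_
      simp_rw [norm_mul]
      have := Real.inner_le_Lp_mul_Lq Finset.univ (fun a => ‖f k a‖) (fun a => ‖T k a‖) hq
      simpa [Nq] using this
    have a2 := Real.inner_le_Lp_mul_Lq (Finset.range N) (fun k => Nq q (f k)) (fun k => Nq q' (T k)) hp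
    simp only [abs_of_nonneg (Nq_nonneg _ _)] at a2
    refine a1.trans (a2.trans ?_)
    have : 0 ≤ ∑ k ∈ Finset.range N, Nq q' (T k) ^ p' := Finset.sum_nonneg (fun i _ => Real.rpow_nonneg (Nq_nonneg _ _) _)
    gcongr
  rcases hX0.eq_or_lt with h0 | h0
  · rw [← h0]; positivity
  rw [Real.mul_rpow hC hX0] at hol
  have hXp : X^(1/p) ≤ Y^(1/p) * C^(1/p') := by
    have e : X = X^(1/p) * X^(1/p') := by
      rw [← Real.rpow_add h0, hp.one_div_add_one_div]; simp
    have h1 : X^(1/p) * X^(1/p') ≤ (Y^(1/p) * C^(1/p')) * X^(1/p') := by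
      rw [← e]; linarith
    exact le_of_mul_le_mul_right h1 (by positivity)
  have := Real.rpow_le_rpow (by positivity) hXp hp0.le
  rw [← Real.rpow_mul hX0, Real.mul_rpow (by positivity) (by positivity), ← Real.rpow_mul hY0, ← Real.rpow_mul hC,
    one_div_mul_cancel hp0.ne', Real.rpow_one, Real.rpow_one] at this
  calc X ≤ _ := this
    _ = _ := by rw [mul_comm]; congr 2; ring

lemma SB_all_of_SB_diag {q : ℝ} (h : ∀ q, 1 < q → SB q q) (p : ℝ) (hp : 1 < p) (hq : 1 < q) : SB p q := by
  rcases le_total p q with hpq | hpq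
  · exact SB_interp hp hpq (h q hq)
  · have hp' := Real.HolderConjugate.conjExponent hp
    have hq' := Real.HolderConjugate.conjExponent hq
    apply SB_dual hp' hq'
    apply SB_interp hp'.symm.lt _ (h _ hq'.symm.lt)
    unfold Real.conjExponent
    rw [div_le_div_iff₀ (by linarith) (by linarith)]
    nlinarith

lemma scal_all (p : ℝ) (hp : 1 < p) : Scal p := by
  have h22 : SB 2 2 := SB_of_scal (by norm_num) scal_two
  rcases le_total p 2 with h | h
  · exact scal_of_SB (by norm_num) (SB_interp hp h h22)
  · have hp' := Real.HolderConjugate.conjExponent hp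
    apply scal_of_SB (q := 2) (by norm_num)
    apply SB_dual hp' Real.HolderConjugate.two_two
    apply SB_interp hp'.symm.lt _ h22
    unfold Real.conjExponent
    rw [div_le_iff₀ (by linarith)]
    linarith

theorem SB_all (p q : ℝ) (hp : 1 < p) (hq : 1 < q) : SB p q :=
  SB_all_of_SB_diag (fun q hq => SB_of_scal (by linarith) (scal_all q hq)) p hp hq

theorem WB_all (q : ℝ) (hq : 1 < q) : WB q := WB_of_SB hq.le (SB_all q q hq hq)

end MTL

namespace MTL

def sg (ξ : ℤ) : ℂ := if 0 ≤ ξ then 1 else -1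

def tp (D : ℕ) (c : ℤ → ℂ) (x : UnitAddCircle) : ℂ := ∑ ξ ∈ Finset.Icc (-(D:ℤ)) D, c ξ * fourier ξ x

lemma tp_cont (D : ℕ) (c : ℤ → ℂ) : Continuous (tp D c) := by
  unfold tp; fun_prop

lemma fourier_shift (ξ : ℤ) (x : UnitAddCircle) (t : ℝ) :
    fourier ξ (x + (t : UnitAddCircle)) = fourier ξ x * ee (ξ * t) := by
  have h : (fourier ξ (t : UnitAddCircle) : ℂ) = ee (ξ * t) := by
    rw [fourier_coe_apply]; unfold ee; congr 1; push_cast; ring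
  rw [← h, fourier_apply, fourier_apply, fourier_apply, smul_add, AddCircle.toCircle_add, Circle.coe_mul]

lemma SS_exp (N : ℕ) (hN : 0 < N) (ξ : ℤ) (h1 : -(N:ℤ) ≤ ξ) (h2 : ξ < N) (i : ℕ) :
    SS N (fun k => ee (ξ * ((k:ℝ) / N))) i = sg ξ * ee (ξ * (((i:ℝ) + 1/2) / N)) := by
  have hN' : (N:ℝ) ≠ 0 := by positivity
  have hNc : (N:ℂ) ≠ 0 := by exact_mod_cast hN.ne'
  obtain ⟨b, hb, hbe⟩ : ∃ b : ℕ, b < N ∧ ((b:ℤ) = if 0 ≤ ξ then ξ else ξ + N) := by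
    split_ifs with h
    · exact ⟨ξ.toNat, by omega, by omega⟩
    · exact ⟨(ξ+N).toNat, by omega, by omega⟩
  have e1 : ∀ k : ℕ, ee (ξ * ((k:ℝ) / N)) = ee (b * ((k:ℝ)/N)) := by
    intro k
    split_ifs at hbe with h
    · rw [← hbe]; simp
    · have : (b:ℝ) = ξ + N := by exact_mod_cast hbe
      rw [this, add_mul, ee_add, show (N:ℝ) * (k / N) = ((k:ℤ):ℝ) by field_simp; simp, ee_int, mul_one]
  have e2 : sg ξ * ee (ξ * (((i:ℝ) + 1/2) / N)) = ee (b * (((i:ℝ) + 1/2) / N)) := by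
    unfold sg
    split_ifs at hbe ⊢ with h
    · rw [← hbe]; simp
    · have : (b:ℝ) = ξ + N := by exact_mod_cast hbe
      rw [this, add_mul, ee_add, show (N:ℝ) * (((i:ℝ)+1/2) / N) = ((i:ℤ):ℝ) + 1/2 by push_cast; field_simp, ee_int_half]
      ring
  rw [e2]
  unfold SS
  simp_rw [e1, ker_eq, smul_eq_mul, mul_assoc, ← Finset.mul_sum, Finset.sum_mul]
  rw [Finset.sum_comm]
  have e3 : ∀ z ∈ Finset.range N, ∑ k ∈ Finset.range N, ee (z * (((i:ℝ) + 1/2) / N)) * ee (-(z * ((k:ℝ) / N))) * ee (b * ((k:ℝ)/N))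
      = if b = z then ee (b * (((i:ℝ) + 1/2) / N)) * N else 0 := by
    intro z hz
    have := orth_sum N hN b z hb (Finset.mem_range.1 hz)
    have e4 : ∀ k : ℕ, ee (z * (((i:ℝ) + 1/2) / N)) * ee (-(z * ((k:ℝ) / N))) * ee (b * ((k:ℝ)/N)) =
       ee (z * (((i:ℝ) + 1/2) / N)) * ee (k * (((b:ℝ) - z)/N)) := by
      intro k
      rw [mul_assoc, ← ee_add]; congr 2; ring
    simp_rw [e4]
    rw [← Finset.mul_sum, this]
    split_ifs with h
    · rw [h]
    · simp
  rw [Finset.sum_congr rfl e3, Finset.sum_ite_eq, if_pos (Finset.mem_range.2 hb)]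
  field_simp

lemma SS_tp (N D : ℕ) (hN : D < N) (c : ℤ → ℂ) (x : UnitAddCircle) (i : ℕ) :
    SS N (fun k => tp D c (x + (((k:ℝ)/N : ℝ) : UnitAddCircle))) i =
      tp D (fun ξ => sg ξ * c ξ) (x + ((((i:ℝ)+1/2)/N : ℝ) : UnitAddCircle)) := by
  unfold tp
  simp_rw [fourier_shift]
  have : ∀ ξ ∈ Finset.Icc (-(D:ℤ)) D, sg ξ * c ξ * (fourier ξ x * ee (ξ * (((i:ℝ) + 1/2) / N)))
     = c ξ * fourier ξ x * SS N (fun k => ee (ξ * ((k:ℝ) / N))) i := by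
    intro ξ hξ
    rw [Finset.mem_Icc] at hξ
    rw [SS_exp N (by omega) ξ (by omega) (by omega)]
    ring
  rw [Finset.sum_congr rfl this]
  simp only [SS, smul_eq_mul, Finset.mul_sum]
  rw [Finset.sum_comm]
  refine Finset.sum_congr rfl fun _ _ => Finset.sum_congr rfl fun _ _ => ?_
  ring

lemma avg_int (N : ℕ) (hN : 0 < N) (F G : UnitAddCircle → ℝ≥0∞) (hF : Measurable F) (hG : Measurable G)
    (s u : ℕ → UnitAddCircle) (C : ℝ≥0∞)
    (h : ∀ x, ∑ i ∈ Finset.range N, F (x + s i) ≤ C * ∑ i ∈ Finset.range N, G (x + u i)) :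
    ∫⁻ x, F x ∂AddCircle.haarAddCircle ≤ C * ∫⁻ x, G x ∂AddCircle.haarAddCircle := by
  have h1 := lintegral_mono (μ := AddCircle.haarAddCircle) h
  rw [lintegral_finsetSum _ (fun i _ => by fun_prop), lintegral_const_mul _ (by fun_prop),
    lintegral_finsetSum _ (fun i _ => by fun_prop)] at h1
  simp_rw [lintegral_add_right_eq_self F, lintegral_add_right_eq_self G] at h1
  simp only [Finset.sum_const, Finset.card_range, nsmul_eq_mul] at h1
  rw [mul_left_comm] at h1
  exact (ENNReal.mul_le_mul_iff_right (by exact_mod_cast hN.ne') (by simp)).1 h1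

lemma Nq_cont {q : ℝ} (hq : 0 < q) {ι : Type} [Fintype ι] (D : ℕ) (c : ι → ℤ → ℂ) :
    Continuous (fun x => Nq q (fun a => tp D (c a) x)) := by
  unfold Nq
  apply Continuous.rpow_const
  · apply continuous_finsetSum
    intro a _
    exact ((tp_cont D (c a)).norm).rpow_const (fun _ => Or.inr hq.le)
  · intro x; right; positivity

theorem strong_T (p q : ℝ) (hp : 1 < p) (hq : 1 < q) : ∃ C : ℝ, 0 ≤ C ∧ ∀ (ι : Type) [Fintype ι] (D : ℕ) (c : ι → ℤ → ℂ),
    ∫⁻ x, ENNReal.ofReal (Nq q (fun a => tp D (fun ξ => sg ξ * c a ξ) x) ^ p) ∂AddCircle.haarAddCircle ≤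
    ENNReal.ofReal C * ∫⁻ x, ENNReal.ofReal (Nq q (fun a => tp D (c a) x) ^ p) ∂AddCircle.haarAddCircle := by
  obtain ⟨C, hC, h⟩ := SB_all p q hp hq
  refine ⟨C, hC, fun ι _ D c => ?_⟩
  obtain ⟨m, hm⟩ : ∃ m : ℕ, D < 2^m := ⟨D, Nat.lt_two_pow_self⟩
  have c1 := Nq_cont (by linarith : 0 < q) D c
  have c2 := Nq_cont (by linarith : 0 < q) D (fun a ξ => sg ξ * c a ξ)
  apply avg_int (2^m) (by positivity) _ _ _ _ (fun i => ((((i:ℝ)+1/2)/(2^m : ℕ) : ℝ) : UnitAddCircle))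
    (fun i => (((i:ℝ)/(2^m : ℕ) : ℝ) : UnitAddCircle))
  · intro x
    have := h m ι (fun k a => tp D (c a) (x + (((k:ℝ)/(2^m : ℕ) : ℝ) : UnitAddCircle)))
    have e : ∀ i, SS (2^m) (fun k a => tp D (c a) (x + (((k:ℝ)/(2^m : ℕ) : ℝ) : UnitAddCircle))) i =
       fun a => tp D (fun ξ => sg ξ * c a ξ) (x + ((((i:ℝ)+1/2)/(2^m : ℕ) : ℝ) : UnitAddCircle)) := by
      intro i; ext a
      rw [SS_apply, SS_tp _ _ hm]
    simp_rw [e] at this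
    rw [← ENNReal.ofReal_sum_of_nonneg (fun _ _ => Real.rpow_nonneg (Nq_nonneg _ _) _),
      ← ENNReal.ofReal_sum_of_nonneg (fun _ _ => Real.rpow_nonneg (Nq_nonneg _ _) _), ← ENNReal.ofReal_mul hC]
    exact ENNReal.ofReal_le_ofReal this
  · exact (c2.measurable.pow_const p).ennreal_ofReal
  · exact (c1.measurable.pow_const p).ennreal_ofReal

theorem weak_T (q : ℝ) (hq : 1 < q) : ∃ C : ℝ, 0 ≤ C ∧ ∀ (ι : Type) [Fintype ι] (D : ℕ) (c : ι → ℤ → ℂ) (t : ℝ), 0 < t →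
    ENNReal.ofReal t * AddCircle.haarAddCircle {x : UnitAddCircle | t < Nq q (fun a => tp D (fun ξ => sg ξ * c a ξ) x)} ≤
    ENNReal.ofReal C * ∫⁻ x, ENNReal.ofReal (Nq q (fun a => tp D (c a) x)) ∂AddCircle.haarAddCircle := by
  obtain ⟨C, hC, h⟩ := WB_all q hq
  refine ⟨C, hC, fun ι _ D c t ht => ?_⟩
  obtain ⟨m, hm⟩ : ∃ m : ℕ, D < 2^m := ⟨D, Nat.lt_two_pow_self⟩
  have c1 := Nq_cont (by linarith : 0 < q) D c
  have c2 := Nq_cont (by linarith : 0 < q) D (fun a ξ => sg ξ * c a ξ)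
  have hms : MeasurableSet {x : UnitAddCircle | t < Nq q (fun a => tp D (fun ξ => sg ξ * c a ξ) x)} :=
    measurableSet_lt measurable_const c2.measurable
  rw [← lintegral_indicator_const hms]
  apply avg_int (2^m) (by positivity) _ _ _ _ (fun i => ((((i:ℝ)+1/2)/(2^m : ℕ) : ℝ) : UnitAddCircle))
    (fun i => (((i:ℝ)/(2^m : ℕ) : ℝ) : UnitAddCircle))
  · intro x
    have := h m ι (fun k a => tp D (c a) (x + (((k:ℝ)/(2^m : ℕ) : ℝ) : UnitAddCircle))) t ht
    have e : ∀ i, SS (2^m) (fun k a => tp D (c a) (x + (((k:ℝ)/(2^m : ℕ) : ℝ) : UnitAddCircle))) i =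
       fun a => tp D (fun ξ => sg ξ * c a ξ) (x + ((((i:ℝ)+1/2)/(2^m : ℕ) : ℝ) : UnitAddCircle)) := by
      intro i; ext a
      rw [SS_apply, SS_tp _ _ hm]
    simp_rw [e] at this
    rw [← ENNReal.ofReal_sum_of_nonneg (fun _ _ => Nq_nonneg _ _), ← ENNReal.ofReal_mul hC]
    refine le_trans (le_of_eq ?_) (ENNReal.ofReal_le_ofReal this)
    rw [ENNReal.ofReal_mul ht.le, ENNReal.ofReal_natCast, Finset.card_filter]
    simp only [Set.indicator_apply, Set.mem_ofPred_eq]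
    push_cast
    rw [Finset.mul_sum]
    refine Finset.sum_congr rfl fun i _ => ?_
    split_ifs <;> simp
  · exact measurable_const.indicator hms
  · exact c1.measurable.ennreal_ofReal

end MTL

namespace MTL

lemma abel (s : ℕ → ℂ) (K m : ℕ) (hm : m < K) (h0 : s 0 = 0) (hK : s K = 0) :
    ∑ n ∈ Finset.range K, (s (n+1) - s n) * (if n ≤ m then 1 else -1) = 2 * s (m+1) := by
  rw [← Finset.sum_range_add_sum_Ico _ (by omega : m + 1 ≤ K)]
  rw [Finset.sum_congr rfl (g := fun n => s (n+1) - s n) (fun n hn => by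
    rw [if_pos (by have := Finset.mem_range.1 hn; omega), mul_one])]
  rw [Finset.sum_congr (s₁ := Finset.Ico (m+1) K) rfl (g := fun n => -(s (n+1) - s n)) (fun n hn => by
    rw [if_neg (by have := Finset.mem_Ico.1 hn; omega), mul_neg_one])]
  rw [Finset.sum_range_sub, Finset.sum_neg_distrib, Finset.sum_Ico_eq_sub _ (by omega), Finset.sum_range_sub,
    Finset.sum_range_sub, h0, hK]
  ring

/-- jump of the symbol -/
def dl (D : ℕ) (τ : ℤ → ℂ) (n : ℕ) : ℂ := τ ((n:ℤ) - D) - τ ((n:ℤ) - D - 1)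

lemma tau_eq (D : ℕ) (τ : ℤ → ℂ) (hτ : ∀ ξ : ℤ, (D:ℤ) < |ξ| → τ ξ = 0) (ξ : ℤ) (hξ : |ξ| ≤ D) :
    2 * τ ξ = ∑ n ∈ Finset.range (2*D+2), dl D τ n * sg (ξ - ((n:ℤ) - D)) := by
  rw [abs_le] at hξ
  have := abel (fun n => τ ((n:ℤ) - D - 1)) (2*D+2) (ξ + D).toNat (by omega)
    (hτ _ (by rw [lt_abs]; right; push_cast; omega)) (hτ _ (by rw [lt_abs]; left; push_cast; omega))
  rw [show ((((ξ + D).toNat + 1 : ℕ) : ℤ) - D - 1) = ξ by omega] at this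
  rw [← this]
  refine Finset.sum_congr rfl fun n _ => ?_
  unfold dl sg
  rw [show (((n+1:ℕ):ℤ) - D - 1) = (n:ℤ) - D by omega]
  congr 1
  by_cases h : n ≤ (ξ + D).toNat
  · rw [if_pos h, if_pos (by omega)]
  · rw [if_neg h, if_neg (by omega)]

lemma tp_shift (D : ℕ) (a : ℤ → ℂ) (ha : ∀ ξ : ℤ, (D:ℤ) < |ξ| → a ξ = 0) (k : ℤ) (hk : |k| ≤ D + 1) (x : UnitAddCircle) :
    tp (2*D+1) (fun ξ => a (ξ + k)) x * fourier k x = tp D a x := by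
  unfold tp
  rw [Finset.sum_mul]
  have : ∀ ξ : ℤ, a (ξ+k) * fourier ξ x * fourier k x = a (ξ + k) * fourier (ξ + k) x := by
    intro ξ; rw [fourier_add]; ring
  simp_rw [this]
  have e : ∑ ξ ∈ Finset.Icc (-((2*D+1:ℕ):ℤ)) (2*D+1:ℕ), a (ξ + k) * fourier (ξ + k) x =
      ∑ ξ ∈ Finset.Icc (-((2*D+1:ℕ):ℤ) + k) ((2*D+1:ℕ) + k), a ξ * fourier ξ x := by
    rw [← Finset.map_add_right_Icc, Finset.sum_map]; rfl
  rw [e]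
  symm
  rw [abs_le] at hk
  apply Finset.sum_subset
  · intro ξ; simp only [Finset.mem_Icc]; omega
  · intro ξ _ h
    rw [ha, zero_mul]
    simp only [Finset.mem_Icc] at h
    rw [lt_abs]; omega

lemma h_bound (D : ℕ) (τ c : ℤ → ℂ) (hτ : ∀ ξ : ℤ, (D:ℤ) < |ξ| → τ ξ = 0) (hc : ∀ ξ : ℤ, (D:ℤ) < |ξ| → c ξ = 0)
    (x : UnitAddCircle) :
    ‖tp D (fun ξ => τ ξ * c ξ) x‖ ≤ ∑ n ∈ Finset.range (2*D+2), ‖dl D τ n‖ *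
      ‖tp (2*D+1) (fun ξ => sg ξ * c (ξ + ((n:ℤ) - D))) x‖ := by
  have e : 2 * tp D (fun ξ => τ ξ * c ξ) x = ∑ n ∈ Finset.range (2*D+2), dl D τ n *
      (tp (2*D+1) (fun ξ => sg ξ * c (ξ + ((n:ℤ) - D))) x * fourier ((n:ℤ) - D) x) := by
    have e1 : ∀ n ∈ Finset.range (2*D+2), tp (2*D+1) (fun ξ => sg ξ * c (ξ + ((n:ℤ) - D))) x * fourier ((n:ℤ) - D) x
        = tp D (fun ξ => sg (ξ - ((n:ℤ) - D)) * c ξ) x := by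
      intro n hn
      rw [Finset.mem_range] at hn
      rw [← tp_shift D (fun ξ => sg (ξ - ((n:ℤ) - D)) * c ξ) (fun ξ h => by simp [hc ξ h]) ((n:ℤ) - D) (by rw [abs_le]; omega)]
      simp
    rw [Finset.sum_congr rfl (fun n hn => by rw [e1 n hn])]
    unfold tp
    simp_rw [Finset.mul_sum]
    rw [Finset.sum_comm]
    refine Finset.sum_congr rfl fun ξ hξ => ?_
    rw [Finset.mem_Icc] at hξ
    have := tau_eq D τ hτ ξ (abs_le.2 hξ)
    rw [show 2 * (τ ξ * c ξ * fourier ξ x) = (2 * τ ξ) * c ξ * fourier ξ x by ring, this, Finset.sum_mul, Finset.sum_mul]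
    refine Finset.sum_congr rfl fun n _ => by ring
  have e2 : ‖2 * tp D (fun ξ => τ ξ * c ξ) x‖ ≤ ∑ n ∈ Finset.range (2*D+2), ‖dl D τ n‖ *
      ‖tp (2*D+1) (fun ξ => sg ξ * c (ξ + ((n:ℤ) - D))) x‖ := by
    rw [e]
    refine (norm_sum_le _ _).trans (Finset.sum_le_sum fun n _ => ?_)
    rw [norm_mul, norm_mul, fourier_apply, Circle.norm_coe, mul_one]
  rw [norm_mul] at e2
  simp at e2
  linarith [norm_nonneg (tp D (fun ξ => τ ξ * c ξ) x)]

section fam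
variable {L : ℕ} (D : ℕ) (q V : ℝ) (τ c : Fin L → ℤ → ℂ)

def fam (a : Fin L × Fin (2*D+2)) (ξ : ℤ) : ℂ := ((‖dl D (τ a.1) a.2‖^(1/q) : ℝ) : ℂ) * c a.1 (ξ + (((a.2:ℕ):ℤ) - D))

lemma tp_smul (D : ℕ) (z : ℂ) (a : ℤ → ℂ) (x : UnitAddCircle) : tp D (fun ξ => z * a ξ) x = z * tp D a x := by
  unfold tp; rw [Finset.mul_sum]; refine Finset.sum_congr rfl fun ξ _ => by ring

lemma fam_upper (hq : 1 < q) (hV : 0 ≤ V) (hc : ∀ ℓ, ∀ ξ : ℤ, (D:ℤ) < |ξ| → c ℓ ξ = 0)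
    (hvar : ∀ ℓ, ∑ n ∈ Finset.range (2*D+2), ‖dl D (τ ℓ) n‖ ≤ V) (x : UnitAddCircle) :
    Nq q (fun a => tp (2*D+1) (fam D q τ c a) x) ≤ V^(1/q) * Nq q (fun ℓ => tp D (c ℓ) x) := by
  have hq0 : 0 < q := by linarith
  unfold Nq
  rw [← Real.mul_rpow hV (by positivity)]
  apply Real.rpow_le_rpow (by positivity) _ (by positivity)
  rw [Fintype.sum_prod_type, Finset.mul_sum]
  refine Finset.sum_le_sum fun ℓ _ => ?_
  have e : ∀ n : Fin (2*D+2), ‖tp (2*D+1) (fam D q τ c (ℓ, n)) x‖^q = ‖dl D (τ ℓ) n‖ * ‖tp D (c ℓ) x‖^q := by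
    intro n
    have := n.2
    unfold fam
    rw [tp_smul, norm_mul, Real.mul_rpow (by positivity) (by positivity), Complex.norm_real,
      Real.norm_of_nonneg (by positivity), ← Real.rpow_mul (by positivity), one_div_mul_cancel hq0.ne', Real.rpow_one,
      ← tp_shift D (c ℓ) (hc ℓ) (((n:ℕ):ℤ) - D) (by rw [abs_le]; omega) x, norm_mul, fourier_apply, Circle.norm_coe, mul_one]
  simp_rw [e]
  rw [← Finset.sum_mul, Fin.sum_univ_eq_sum_range (fun n => ‖dl D (τ ℓ) n‖)]
  exact mul_le_mul_of_nonneg_right (hvar ℓ) (by positivity)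

lemma fam_lower (hq : 1 < q) (hV : 0 ≤ V) (hτ : ∀ ℓ, ∀ ξ : ℤ, (D:ℤ) < |ξ| → τ ℓ ξ = 0)
    (hc : ∀ ℓ, ∀ ξ : ℤ, (D:ℤ) < |ξ| → c ℓ ξ = 0)
    (hvar : ∀ ℓ, ∑ n ∈ Finset.range (2*D+2), ‖dl D (τ ℓ) n‖ ≤ V) (x : UnitAddCircle) :
    Nq q (fun ℓ => tp D (fun ξ => τ ℓ ξ * c ℓ ξ) x) ≤
     V^(1-1/q) * Nq q (fun a => tp (2*D+1) (fun ξ => sg ξ * fam D q τ c a ξ) x) := by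
  have hq0 : 0 < q := by linarith
  have hq1 : 0 < q - 1 := by linarith
  have e0 : V^(1-1/q) = (V^(q-1))^(1/q) := by
    rw [← Real.rpow_mul hV]; congr 1; field_simp
  rw [e0]
  unfold Nq
  rw [← Real.mul_rpow (by positivity) (by positivity)]
  apply Real.rpow_le_rpow (by positivity) _ (by positivity)
  rw [Fintype.sum_prod_type, Finset.mul_sum]
  refine Finset.sum_le_sum fun ℓ _ => ?_
  have e : ∀ n : Fin (2*D+2), ‖tp (2*D+1) (fun ξ => sg ξ * fam D q τ c (ℓ, n) ξ) x‖^q = ‖dl D (τ ℓ) n‖ *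
      ‖tp (2*D+1) (fun ξ => sg ξ * c ℓ (ξ + (((n:ℕ):ℤ) - D))) x‖^q := by
    intro n
    unfold fam
    simp_rw [mul_left_comm (sg _)]
    rw [tp_smul, norm_mul, Real.mul_rpow (by positivity) (by positivity), Complex.norm_real,
      Real.norm_of_nonneg (by positivity), ← Real.rpow_mul (by positivity), one_div_mul_cancel hq0.ne', Real.rpow_one]
  simp_rw [e]
  rw [Fin.sum_univ_eq_sum_range (fun n => ‖dl D (τ ℓ) n‖ *
      ‖tp (2*D+1) (fun ξ => sg ξ * c ℓ (ξ + ((n:ℤ) - D))) x‖^q)]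
  have h1 := h_bound D (τ ℓ) (c ℓ) (hτ ℓ) (hc ℓ) x
  have h2 := Real.inner_le_weight_mul_Lp_of_nonneg (Finset.range (2*D+2)) hq.le (fun n => ‖dl D (τ ℓ) n‖)
    (fun n => ‖tp (2*D+1) (fun ξ => sg ξ * c ℓ (ξ + ((n:ℤ) - D))) x‖) (fun _ => norm_nonneg _) (fun _ => norm_nonneg _)
  have h3 := Real.rpow_le_rpow (norm_nonneg _) (h1.trans h2) hq0.le
  refine h3.trans ?_
  have p1 : 0 ≤ ∑ n ∈ Finset.range (2*D+2), ‖dl D (τ ℓ) n‖ := by positivity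
  rw [Real.mul_rpow (by positivity) (by positivity), ← Real.rpow_mul p1, ← Real.rpow_mul (by positivity),
    inv_mul_cancel₀ hq0.ne', Real.rpow_one, show (1 - q⁻¹) * q = q - 1 by field_simp]
  gcongr
  exact hvar ℓ
end fam

theorem fin_strong (p q : ℝ) (hp : 1 < p) (hq : 1 < q) : ∃ C : ℝ, 0 ≤ C ∧ ∀ (L D : ℕ) (V : ℝ) (τ c : Fin L → ℤ → ℂ),
    0 < V → (∀ ℓ, ∀ ξ : ℤ, (D:ℤ) < |ξ| → τ ℓ ξ = 0) → (∀ ℓ, ∀ ξ : ℤ, (D:ℤ) < |ξ| → c ℓ ξ = 0) →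
    (∀ ℓ, ∑ n ∈ Finset.range (2*D+2), ‖dl D (τ ℓ) n‖ ≤ V) →
    ∫⁻ x, ENNReal.ofReal (Nq q (fun ℓ => tp D (fun ξ => τ ℓ ξ * c ℓ ξ) x) ^ p) ∂AddCircle.haarAddCircle ≤
    ENNReal.ofReal (C * V^p) * ∫⁻ x, ENNReal.ofReal (Nq q (fun ℓ => tp D (c ℓ) x) ^ p) ∂AddCircle.haarAddCircle := by
  obtain ⟨C, hC, h⟩ := strong_T p q hp hq
  refine ⟨C, hC, fun L D V τ c hV hτ hc hvar => ?_⟩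
  have hp0 : 0 ≤ p := by linarith
  calc _ ≤ ∫⁻ x, ENNReal.ofReal ((V^(1-1/q))^p) * ENNReal.ofReal (Nq q (fun a => tp (2*D+1) (fun ξ => sg ξ * fam D q τ c a ξ) x) ^ p) ∂AddCircle.haarAddCircle := by
        refine lintegral_mono fun x => ?_
        rw [← ENNReal.ofReal_mul (by positivity), ← Real.mul_rpow (by positivity) (Nq_nonneg _ _)]
        exact ENNReal.ofReal_le_ofReal (Real.rpow_le_rpow (Nq_nonneg _ _) (fam_lower D q V τ c hq hV.le hτ hc hvar x) hp0)
    _ ≤ ENNReal.ofReal ((V^(1-1/q))^p) * (ENNReal.ofReal C * ∫⁻ x, ENNReal.ofReal (Nq q (fun a => tp (2*D+1) (fam D q τ c a) x) ^ p) ∂AddCircle.haarAddCircle) := by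
        rw [lintegral_const_mul' _ _ ENNReal.ofReal_ne_top]
        gcongr
        exact h _ _ _
    _ ≤ ENNReal.ofReal ((V^(1-1/q))^p) * (ENNReal.ofReal C * ∫⁻ x, ENNReal.ofReal ((V^(1/q))^p) * ENNReal.ofReal (Nq q (fun ℓ => tp D (c ℓ) x) ^ p) ∂AddCircle.haarAddCircle) := by
        gcongr with x
        rw [← ENNReal.ofReal_mul (by positivity), ← Real.mul_rpow (by positivity) (Nq_nonneg _ _)]
        exact ENNReal.ofReal_le_ofReal (Real.rpow_le_rpow (Nq_nonneg _ _) (fam_upper D q V τ c hq hV.le hc hvar x) hp0)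
    _ = _ := by
        rw [lintegral_const_mul' _ _ ENNReal.ofReal_ne_top, ← mul_assoc, ← mul_assoc, ← ENNReal.ofReal_mul (by positivity),
          ← ENNReal.ofReal_mul (by positivity)]
        congr 2
        rw [mul_right_comm, ← Real.mul_rpow (by positivity) (by positivity), ← Real.rpow_add hV]
        simp [mul_comm]

theorem fin_weak (q : ℝ) (hq : 1 < q) : ∃ C : ℝ, 0 ≤ C ∧ ∀ (L D : ℕ) (V : ℝ) (τ c : Fin L → ℤ → ℂ),
    0 < V → (∀ ℓ, ∀ ξ : ℤ, (D:ℤ) < |ξ| → τ ℓ ξ = 0) → (∀ ℓ, ∀ ξ : ℤ, (D:ℤ) < |ξ| → c ℓ ξ = 0) →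
    (∀ ℓ, ∑ n ∈ Finset.range (2*D+2), ‖dl D (τ ℓ) n‖ ≤ V) → ∀ t : ℝ, 0 < t → 
    ENNReal.ofReal t * AddCircle.haarAddCircle {x : UnitAddCircle | t < Nq q (fun ℓ => tp D (fun ξ => τ ℓ ξ * c ℓ ξ) x)} ≤
    ENNReal.ofReal (C * V) * ∫⁻ x, ENNReal.ofReal (Nq q (fun ℓ => tp D (c ℓ) x)) ∂AddCircle.haarAddCircle := by
  obtain ⟨C, hC, h⟩ := weak_T q hq
  refine ⟨C, hC, fun L D V τ c hV hτ hc hvar t ht => ?_⟩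
  have hW : 0 < V^(1-1/q) := by positivity
  calc _ ≤ ENNReal.ofReal (V^(1-1/q) * (t / V^(1-1/q))) * AddCircle.haarAddCircle {x : UnitAddCircle | t / V^(1-1/q) < Nq q (fun a => tp (2*D+1) (fun ξ => sg ξ * fam D q τ c a ξ) x)} := by
        rw [mul_div_cancel₀ _ hW.ne']
        refine mul_le_mul' le_rfl (measure_mono fun x hx => ?_)
        simp only [Set.mem_ofPred_eq] at hx ⊢
        rw [div_lt_iff₀' hW]
        exact hx.trans_le (fam_lower D q V τ c hq hV.le hτ hc hvar x)
    _ ≤ ENNReal.ofReal (V^(1-1/q)) * (ENNReal.ofReal C * ∫⁻ x, ENNReal.ofReal (Nq q (fun a => tp (2*D+1) (fam D q τ c a) x)) ∂AddCircle.haarAddCircle) := by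
        rw [ENNReal.ofReal_mul hW.le, mul_assoc]
        refine mul_le_mul' le_rfl (h _ _ _ _ (by positivity))
    _ ≤ ENNReal.ofReal (V^(1-1/q)) * (ENNReal.ofReal C * ∫⁻ x, ENNReal.ofReal (V^(1/q)) * ENNReal.ofReal (Nq q (fun ℓ => tp D (c ℓ) x)) ∂AddCircle.haarAddCircle) := by
        gcongr with x
        rw [← ENNReal.ofReal_mul (by positivity)]
        exact ENNReal.ofReal_le_ofReal (fam_upper D q V τ c hq hV.le hc hvar x)
    _ = _ := by
        rw [lintegral_const_mul' _ _ ENNReal.ofReal_ne_top, ← mul_assoc, ← mul_assoc, ← ENNReal.ofReal_mul (by positivity),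
          ← ENNReal.ofReal_mul (by positivity)]
        congr 2
        rw [mul_right_comm, ← Real.rpow_add hV]
        simp [mul_comm]

end MTL

namespace MTL

lemma vbound (T : Finset ℤ) (J : Finset ℕ) (B : Finset ℤ) (u : ℤ → ℝ) (σ : ℤ → ℂ) (M : ℝ) (hM : 0 ≤ M)
    (hσ : MarcinkiewiczCondition σ M)
    (hu : ∀ ξ, u ξ ≤ ∑ j ∈ J, (if ((2 : ℤ) ^ (j - 1) ≤ |ξ| ∧ |ξ| < (2 : ℤ) ^ j) then ‖σ (ξ + 1) - σ ξ‖ else 0)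
      + if ξ ∈ B then 2 * M else 0) :
    ∑ ξ ∈ T, u ξ ≤ J.card * M + B.card * (2 * M) := by
  refine (Finset.sum_le_sum fun ξ _ => hu ξ).trans ?_
  rw [Finset.sum_add_distrib, Finset.sum_comm]
  refine add_le_add ?_ ?_
  · rw [← nsmul_eq_mul]
    refine Finset.sum_le_card_nsmul _ _ _ fun j _ => ?_
    refine le_trans ?_ (hσ.2 j)
    rw [← Finset.sum_filter]
    refine Finset.sum_le_sum_of_subset_of_nonneg ?_ (fun _ _ _ => norm_nonneg _)
    intro ξ
    simp only [Finset.mem_filter, Finset.mem_Icc]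
    rintro ⟨_, h1, h2⟩
    exact ⟨abs_le.1 h2.le, h1, h2⟩
  · rw [← Finset.sum_filter, Finset.sum_const, nsmul_eq_mul]
    gcongr
    intro ξ; simp

def EE (ℓ : ℕ) (ξ : ℤ) : Prop := |ξ| < 2^ℓ ∧ (5 ≤ ℓ → 2^(ℓ-4) ≤ |ξ|)

open Classical in
def tau (σ : ℤ → ℂ) (ℓ : ℕ) (ξ : ℤ) : ℂ := if EE ℓ ξ then σ ξ else 0

lemma tau_norm (σ : ℤ → ℂ) (M : ℝ) (hσ : MarcinkiewiczCondition σ M) (ℓ : ℕ) (ξ : ℤ) : ‖tau σ ℓ ξ‖ ≤ M := by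
  unfold tau
  split_ifs
  · exact hσ.1 ξ
  · simpa using (norm_nonneg _).trans (hσ.1 0)

lemma blk_nonneg (J : Finset ℕ) (σ : ℤ → ℂ) (ξ : ℤ) : 0 ≤ ∑ j ∈ J, (if ((2 : ℤ) ^ (j - 1) ≤ |ξ| ∧ |ξ| < (2 : ℤ) ^ j) then ‖σ (ξ + 1) - σ ξ‖ else 0) :=
  Finset.sum_nonneg fun j _ => by split_ifs <;> positivity

lemma tau_var (σ : ℤ → ℂ) (M : ℝ) (hσ : MarcinkiewiczCondition σ M) (ℓ D : ℕ) :
    ∑ n ∈ Finset.range (2*D+2), ‖dl D (tau σ ℓ) n‖ ≤ 70 * M + 1 := by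
  have hM : 0 ≤ M := (norm_nonneg _).trans (hσ.1 0)
  have inj : Function.Injective (fun n : ℕ => (n:ℤ) - D - 1) := fun a b h => by simp only at h; omega
  have e : ∑ n ∈ Finset.range (2*D+2), ‖dl D (tau σ ℓ) n‖ =
      ∑ ξ ∈ (Finset.range (2*D+2)).map ⟨_, inj⟩, ‖tau σ ℓ (ξ + 1) - tau σ ℓ ξ‖ := by
    rw [Finset.sum_map]
    refine Finset.sum_congr rfl fun n _ => ?_
    simp only [dl, Function.Embedding.coeFn_mk]
    rw [show (n:ℤ) - D - 1 + 1 = n - D by ring]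
  rw [e]
  have crude : ∀ ξ, ‖tau σ ℓ (ξ + 1) - tau σ ℓ ξ‖ ≤ 2 * M := fun ξ => by
    have := norm_sub_le (tau σ ℓ (ξ+1)) (tau σ ℓ ξ)
    linarith [tau_norm σ M hσ ℓ ξ, tau_norm σ M hσ ℓ (ξ+1)]
  by_cases hℓ : 5 ≤ ℓ
  · obtain ⟨s, rfl⟩ : ∃ s, ℓ = s + 4 := ⟨ℓ - 4, by omega⟩
    obtain ⟨Q, hQ⟩ : ∃ Q : ℤ, Q = 2^s := ⟨_, rfl⟩
    have hQ0 : 0 < Q := by rw [hQ]; positivity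
    have hE : ∀ ξ, EE (s+4) ξ ↔ (|ξ| < 16 * Q ∧ Q ≤ |ξ|) := by
      intro ξ
      unfold EE
      rw [show s + 4 - 4 = s by omega, pow_add, ← hQ]
      constructor
      · rintro ⟨h1, h2⟩; exact ⟨by linarith, h2 hℓ⟩
      · rintro ⟨h1, h2⟩; exact ⟨by linarith, fun _ => h2⟩
    have := vbound ((Finset.range (2*D+2)).map ⟨_, inj⟩) {s+1,s+2,s+3,s+4} {-(16*Q), -Q, Q-1, 16*Q-1}
      (fun ξ => ‖tau σ (s+4) (ξ + 1) - tau σ (s+4) ξ‖) σ M hM hσ ?_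
    · refine this.trans ?_
      have c1 : (({s+1,s+2,s+3,s+4} : Finset ℕ).card : ℝ) ≤ 4 := by exact_mod_cast Finset.card_le_four
      have c2 : (({-(16*Q), -Q, Q-1, 16*Q-1} : Finset ℤ).card : ℝ) ≤ 4 := by exact_mod_cast Finset.card_le_four
      nlinarith
    · intro ξ
      have hb := blk_nonneg {s+1,s+2,s+3,s+4} σ ξ
      by_cases hB : ξ ∈ ({-(16*Q), -Q, Q-1, 16*Q-1} : Finset ℤ)
      · rw [if_pos hB]
        linarith [crude ξ]
      · rw [if_neg hB, add_zero]
        simp only [Finset.mem_insert, Finset.mem_singleton] at hB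
        have hiff : EE (s+4) (ξ+1) ↔ EE (s+4) ξ := by
          rw [hE, hE]
          rcases abs_cases ξ with ⟨h1, h1'⟩ | ⟨h1, h1'⟩ <;> rcases abs_cases (ξ+1) with ⟨h2, h2'⟩ | ⟨h2, h2'⟩ <;>
            rw [h1, h2] <;> omega
        by_cases hEx : EE (s+4) ξ
        · unfold tau
          rw [if_pos hEx, if_pos (hiff.2 hEx)]
          rw [hE] at hEx
          obtain ⟨j, hj, hjb⟩ : ∃ j ∈ ({s+1,s+2,s+3,s+4} : Finset ℕ), (2 : ℤ) ^ (j - 1) ≤ |ξ| ∧ |ξ| < (2 : ℤ) ^ j := by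
            have p1 : (2:ℤ)^(s+1) = 2 * Q := by rw [hQ]; ring
            have p2 : (2:ℤ)^(s+2) = 4 * Q := by rw [hQ]; ring
            have p3 : (2:ℤ)^(s+3) = 8 * Q := by rw [hQ]; ring
            have p4 : (2:ℤ)^(s+4) = 16 * Q := by rw [hQ]; ring
            by_cases a1 : |ξ| < 2 * Q
            · refine ⟨s+1, by simp, ?_⟩
              rw [show s + 1 - 1 = s by omega, ← hQ, p1]; omega
            by_cases a2 : |ξ| < 4 * Q
            · refine ⟨s+2, by simp, ?_⟩
              rw [show s + 2 - 1 = s+1 by omega, p2, p1]; omega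
            by_cases a3 : |ξ| < 8 * Q
            · refine ⟨s+3, by simp, ?_⟩
              rw [show s + 3 - 1 = s+2 by omega, p2, p3]; omega
            · refine ⟨s+4, by simp, ?_⟩
              rw [show s + 4 - 1 = s+3 by omega, p4, p3]; omega
          refine le_trans (le_of_eq ?_) (Finset.single_le_sum (f := fun j => if ((2 : ℤ) ^ (j - 1) ≤ |ξ| ∧ |ξ| < (2 : ℤ) ^ j) then ‖σ (ξ + 1) - σ ξ‖ else 0) (fun i _ => by
            split_ifs <;> positivity) hj)
          rw [if_pos hjb]
        · unfold tau
          rw [if_neg hEx, if_neg (fun h => hEx (hiff.1 h))]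
          simpa using hb
  · have := vbound ((Finset.range (2*D+2)).map ⟨_, inj⟩) ∅ (Finset.Icc (-17) 17)
      (fun ξ => ‖tau σ ℓ (ξ + 1) - tau σ ℓ ξ‖) σ M hM hσ ?_
    · refine this.trans ?_
      simp
      linarith
    · intro ξ
      simp only [Finset.sum_empty, zero_add]
      by_cases hB : ξ ∈ Finset.Icc (-17:ℤ) 17
      · rw [if_pos hB]; exact crude ξ
      · rw [if_neg hB]
        have hp : (2:ℤ)^ℓ ≤ 2^4 := pow_le_pow_right₀ (by norm_num) (by omega)
        rw [Finset.mem_Icc] at hB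
        have n1 : ¬ EE ℓ ξ := fun h => by
          have := abs_lt.1 (h.1.trans_le hp); omega
        have n2 : ¬ EE ℓ (ξ+1) := fun h => by
          have := abs_lt.1 (h.1.trans_le hp); omega
        unfold tau
        rw [if_neg n1, if_neg n2]; simp

lemma tau_supp (σ : ℤ → ℂ) (ℓ D : ℕ) (hD : 2^ℓ ≤ D) (ξ : ℤ) (h : (D:ℤ) < |ξ|) : tau σ ℓ ξ = 0 := by
  unfold tau
  rw [if_neg]
  intro hE
  have h2 : ((2^ℓ : ℕ) : ℤ) ≤ D := by exact_mod_cast hD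
  push_cast at h2
  linarith [hE.1]

lemma lp_supp (η : ℝ → ℝ) (hη : IsAdmissibleEta η) (ℓ : ℕ) (ξ : ℤ) (h : lpProfile η ℓ (torusEig ξ) ≠ 0) : EE ℓ ξ := by
  have hpi := Real.pi_gt_three
  have hpi2 : π^2 < 10 := by have := Real.pi_lt_d2; nlinarith
  have hpi3 : 9 < π^2 := by nlinarith
  have hsq : torusEig ξ ^ 2 = 1 + 4 * π ^ 2 * (ξ : ℝ) ^ 2 := by
    unfold torusEig; rw [Real.sq_sqrt (by positivity)]
  have h0 : 0 ≤ torusEig ξ := Real.sqrt_nonneg _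
  have supp : ∀ y, η y ≠ 0 → 1/2 ≤ y ∧ y ≤ 2 := fun y hy => hη.support_subset hy
  unfold lpProfile at h
  split_ifs at h with hl
  · subst hl
    obtain ⟨j, hj⟩ : ∃ j : {j : ℤ // j ≤ 0}, η ((2 : ℝ) ^ (-(j : ℤ)) * torusEig ξ) ≠ 0 := by
      by_contra hcon
      push Not at hcon
      apply h
      simp only [hcon, tsum_zero]
    have h1 := (supp _ hj).2
    have h2 : (1:ℝ) ≤ (2 : ℝ) ^ (-(j : ℤ)) := one_le_zpow₀ (by norm_num) (by have := j.2; omega)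
    have h3 : torusEig ξ ≤ 2 := by nlinarith
    have h4 : (ξ:ℝ)^2 < 1 := by nlinarith [sq_nonneg (ξ:ℝ)]
    have h5 : ξ^2 < 1 := by exact_mod_cast h4
    refine ⟨?_, by omega⟩
    rw [pow_zero, abs_lt]; constructor <;> nlinarith
  · obtain ⟨h1, h2⟩ := supp _ h
    rw [zpow_neg, zpow_natCast] at h1 h2
    have hp : (0:ℝ) < 2^ℓ := by positivity
    rw [inv_mul_le_iff₀ hp] at h2
    rw [le_inv_mul_iff₀ hp] at h1
    constructor
    · have : ((|ξ| : ℤ) : ℝ) < ((2^ℓ : ℤ) : ℝ) := by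
        push_cast
        apply abs_lt_of_sq_lt_sq _ hp.le
        nlinarith
      exact_mod_cast this
    · intro h5
      obtain ⟨s, rfl⟩ : ∃ s, ℓ = s + 1 + 4 := ⟨ℓ - 5, by omega⟩
      rw [show s + 1 + 4 - 4 = s + 1 by omega]
      by_contra hcon
      push Not at hcon
      have h6 : ((|ξ| : ℤ) : ℝ) < ((2^(s+1) : ℤ) : ℝ) := by exact_mod_cast hcon
      push_cast at h6
      have h7 : (ξ:ℝ)^2 < (2^(s+1))^2 := by
        rw [← sq_abs]; exact pow_lt_pow_left₀ h6 (abs_nonneg _) (by norm_num)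
      have h8 : (2:ℝ) ≤ 2^(s+1) := by
        rw [pow_succ]; have : (1:ℝ) ≤ 2^s := one_le_pow₀ (by norm_num)
        linarith
      rw [pow_add 2 (s+1) 4] at h1
      generalize (2:ℝ)^(s+1) = Q at *
      nlinarith

end MTL

namespace MTL

lemma norm_fourier_pt (n : ℤ) (x : UnitAddCircle) : ‖(fourier n x : ℂ)‖ = 1 := by
  rw [fourier_apply, Circle.norm_coe]

lemma coeff_mul (σ : ℤ → ℂ) (f : UnitAddCircle → ℂ) :
    (∀ n, fourierCoeff (torusMul σ f) n = σ n * fourierCoeff f n) ∨ (∀ n, fourierCoeff (torusMul σ f) n = 0) := by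
  by_cases hs : Summable (fun ξ => ‖σ ξ * fourierCoeff f ξ‖)
  · left
    intro n
    have hint : ∀ ξ : ℤ, Integrable (fun x : UnitAddCircle => fourier (-n) x • (σ ξ * fourierCoeff f ξ * fourier ξ x)) AddCircle.haarAddCircle := by
      intro ξ
      have : Continuous (fun x : UnitAddCircle => fourier (-n) x • (σ ξ * fourierCoeff f ξ * fourier ξ x)) := by fun_prop
      exact this.integrable_of_hasCompactSupport (HasCompactSupport.of_compactSpace _)
    have h := hasSum_integral_of_summable_integral_norm hint (by
      simp only [smul_eq_mul, norm_mul, norm_fourier_pt]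
      simpa using hs)
    have e1 : ∀ ξ : ℤ, ∫ x : UnitAddCircle, fourier (-n) x • (σ ξ * fourierCoeff f ξ * fourier ξ x) ∂AddCircle.haarAddCircle =
        if ξ = n then σ n * fourierCoeff f n else 0 := by
      intro ξ
      have := fourierCoeff.const_mul (fun x : UnitAddCircle => (fourier ξ x : ℂ)) (σ ξ * fourierCoeff f ξ) n
      have h2 := congrFun (fourierCoeff_fourier (T := 1) ξ) n
      rw [show fourierCoeff (fun x : UnitAddCircle => (fourier ξ x : ℂ)) n = (Pi.single ξ (1:ℂ) : ℤ → ℂ) n from h2] at this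
      refine this.trans ?_
      by_cases hh : ξ = n
      · subst hh; simp
      · rw [if_neg hh, Pi.single_eq_of_ne (Ne.symm hh), mul_zero]
    simp_rw [e1] at h
    have h3 := h.unique (hasSum_ite_eq n _)
    rw [← h3]
    simp_rw [smul_eq_mul, tsum_mul_left]
    rfl
  · right
    have : torusMul σ f = 0 := by
      ext x
      unfold torusMul
      apply tsum_eq_zero_of_not_summable
      intro h
      apply hs
      have := h.norm
      simpa only [norm_mul, norm_fourier_pt, mul_one] using this
    intro n
    rw [this]
    simp [fourierCoeff]

/-- weighted coefficients -/
def cf (η : ℝ → ℝ) (r : ℝ) (f : UnitAddCircle → ℂ) (ℓ : ℕ) (ξ : ℤ) : ℂ :=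
  (((2:ℝ)^((ℓ:ℝ)*r) : ℝ) : ℂ) * ((lpProfile η ℓ (torusEig ξ) : ℂ) * fourierCoeff f ξ)

lemma cf_supp {η : ℝ → ℝ} (hη : IsAdmissibleEta η) (r : ℝ) (f : UnitAddCircle → ℂ) (ℓ D : ℕ) (hD : 2^ℓ ≤ D) (ξ : ℤ)
    (h : (D:ℤ) < |ξ|) : cf η r f ℓ ξ = 0 := by
  unfold cf
  by_cases h0 : lpProfile η ℓ (torusEig ξ) = 0
  · simp [h0]
  · have hE := lp_supp η hη ℓ ξ h0
    have h2 : ((2^ℓ : ℕ) : ℤ) ≤ D := by exact_mod_cast hD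
    push_cast at h2
    linarith [hE.1]

lemma LP_eq {η : ℝ → ℝ} (hη : IsAdmissibleEta η) (r : ℝ) (f : UnitAddCircle → ℂ) (ℓ D : ℕ) (hD : 2^ℓ ≤ D) (x : UnitAddCircle) :
    ENNReal.ofReal ((2 : ℝ) ^ ((ℓ : ℝ) * r)) * (‖torusLP η ℓ f x‖₊ : ℝ≥0∞) = ENNReal.ofReal ‖tp D (cf η r f ℓ) x‖ := by
  have e : torusLP η ℓ f x = tp D (fun ξ => (lpProfile η ℓ (torusEig ξ) : ℂ) * fourierCoeff f ξ) x := by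
    unfold torusLP torusMul tp
    apply tsum_eq_sum
    intro ξ hξ
    by_cases h0 : lpProfile η ℓ (torusEig ξ) = 0
    · simp [h0]
    · have hE := lp_supp η hη ℓ ξ h0
      have h2 : ((2^ℓ : ℕ) : ℤ) ≤ D := by exact_mod_cast hD
      push_cast at h2
      exact absurd (Finset.mem_Icc.2 (abs_le.1 (hE.1.le.trans h2))) hξ
  have e2 : tp D (cf η r f ℓ) x = (((2:ℝ)^((ℓ:ℝ)*r) : ℝ) : ℂ) * torusLP η ℓ f x := by
    rw [e, ← tp_smul]; rfl
  rw [e2, norm_mul, Complex.norm_real, Real.norm_of_nonneg (by positivity), ENNReal.ofReal_mul (by positivity),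
    ofReal_norm]
  rfl

/-- truncated square function -/
def NL (η : ℝ → ℝ) (r q : ℝ) (f : UnitAddCircle → ℂ) (L : ℕ) (x : UnitAddCircle) : ℝ :=
  Nq q (fun ℓ : Fin L => tp (2^L) (cf η r f ℓ) x)

lemma NL_eq {η : ℝ → ℝ} (hη : IsAdmissibleEta η) (r q : ℝ) (hq : 1 < q) (f : UnitAddCircle → ℂ) (L : ℕ) (x : UnitAddCircle) :
    ENNReal.ofReal (NL η r q f L x) =
    (∑ ℓ ∈ Finset.range L, (ENNReal.ofReal ((2 : ℝ) ^ ((ℓ : ℝ) * r)) * (‖torusLP η ℓ f x‖₊ : ℝ≥0∞)) ^ q) ^ (1/q) := by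
  have hq0 : 0 < q := by linarith
  unfold NL Nq
  rw [← ENNReal.ofReal_rpow_of_nonneg (by positivity) (by positivity),
    ENNReal.ofReal_sum_of_nonneg (fun _ _ => by positivity),
    ← Fin.sum_univ_eq_sum_range (fun ℓ => (ENNReal.ofReal ((2 : ℝ) ^ ((ℓ : ℝ) * r)) * (‖torusLP η ℓ f x‖₊ : ℝ≥0∞)) ^ q)]
  congr 1
  refine Finset.sum_congr rfl fun ℓ _ => ?_
  rw [LP_eq hη r f ℓ (2^L) (pow_le_pow_right₀ (by norm_num) ℓ.2.le), ENNReal.ofReal_rpow_of_nonneg (by positivity) hq0.le]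

lemma NL_mono {η : ℝ → ℝ} (hη : IsAdmissibleEta η) (r q : ℝ) (hq : 1 < q) (f : UnitAddCircle → ℂ) (x : UnitAddCircle) :
    Monotone (fun L => ENNReal.ofReal (NL η r q f L x)) := by
  intro L L' h
  simp only [NL_eq hη r q hq]
  gcongr

lemma Tl_eq {η : ℝ → ℝ} (hη : IsAdmissibleEta η) (r q : ℝ) (hq : 1 < q) (f : UnitAddCircle → ℂ) (x : UnitAddCircle) :
    torusTlFn η r q f x = ⨆ L, ENNReal.ofReal (NL η r q f L x) := by
  have hq0 : 0 < 1/q := by positivity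
  simp only [NL_eq hη r q hq]
  unfold torusTlFn
  rw [ENNReal.tsum_eq_iSup_nat]
  exact (ENNReal.orderIsoRpow (1/q) hq0).map_iSup _

lemma NL_cont {η : ℝ → ℝ} (r q : ℝ) (hq : 1 < q) (f : UnitAddCircle → ℂ) (L : ℕ) : Continuous (NL η r q f L) :=
  Nq_cont (by linarith) (2^L) (fun ℓ : Fin L => cf η r f ℓ)

lemma NL_mul {η : ℝ → ℝ} (hη : IsAdmissibleEta η) (r q : ℝ) (σ : ℤ → ℂ) (f g : UnitAddCircle → ℂ)
    (hg : ∀ n, fourierCoeff g n = σ n * fourierCoeff f n) (L : ℕ) (x : UnitAddCircle) :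
    NL η r q g L x = Nq q (fun ℓ : Fin L => tp (2^L) (fun ξ => tau σ ℓ ξ * cf η r f ℓ ξ) x) := by
  unfold NL
  congr 1
  ext ℓ
  congr 1
  ext ξ
  unfold cf
  rw [hg]
  by_cases h0 : lpProfile η ℓ (torusEig ξ) = 0
  · simp [h0]
  · have hE := lp_supp η hη ℓ ξ h0
    unfold tau
    rw [if_pos hE]
    ring

lemma zero_marc {σ : ℤ → ℂ} {M : ℝ} (hσ : MarcinkiewiczCondition σ M) : MarcinkiewiczCondition 0 M := by
  have hM : 0 ≤ M := (norm_nonneg _).trans (hσ.1 0)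
  exact ⟨fun _ => by simpa using hM, fun _ => by simpa using hM⟩

lemma strong_final {η : ℝ → ℝ} (hη : IsAdmissibleEta η) (M r p q : ℝ) (hM : 0 ≤ M) (hp : 1 < p) (hq : 1 < q) :
    ∃ C : ℝ, 0 < C ∧ ∀ σ, MarcinkiewiczCondition σ M → ∀ f g : UnitAddCircle → ℂ,
      (∀ n, fourierCoeff g n = σ n * fourierCoeff f n) →
      torusTlNorm η r p q g ≤ ENNReal.ofReal C * torusTlNorm η r p q f := by
  obtain ⟨C, hC, h⟩ := fin_strong p q hp hq
  have hp0 : 0 < p := by linarith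
  have hpi : 0 < 1/p := by positivity
  have hV : 0 < 70 * M + 1 := by positivity
  refine ⟨((C+1) * (70 * M + 1)^p)^(1/p), by positivity, fun σ hσ f g hg => ?_⟩
  unfold torusTlNorm
  rw [← ENNReal.ofReal_rpow_of_nonneg (by positivity) (by positivity), ← ENNReal.mul_rpow_of_nonneg _ _ hpi.le]
  apply ENNReal.rpow_le_rpow _ hpi.le
  have e : ∀ u x, torusTlFn η r q u x ^ p = ⨆ L, ENNReal.ofReal (NL η r q u L x ^ p) := by
    intro u x
    rw [Tl_eq hη r q hq]
    refine ((ENNReal.orderIsoRpow p hp0).map_iSup _).trans ?_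
    refine iSup_congr fun L => ?_
    exact ENNReal.ofReal_rpow_of_nonneg (Nq_nonneg _ _) hp0.le
  have em : ∀ u L, Measurable (fun x => ENNReal.ofReal (NL η r q u L x ^ p)) := fun u L =>
    ((NL_cont r q hq u L).measurable.pow_const p).ennreal_ofReal
  have mono : ∀ u, Monotone (fun L x => ENNReal.ofReal (NL η r q u L x ^ p)) := by
    intro u L L' hL x
    simp only
    have nn : ∀ L, 0 ≤ NL η r q u L x := fun L => Nq_nonneg _ _
    rw [← ENNReal.ofReal_rpow_of_nonneg (nn L) hp0.le, ← ENNReal.ofReal_rpow_of_nonneg (nn L') hp0.le]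
    exact ENNReal.rpow_le_rpow (NL_mono hη r q hq u x hL) hp0.le
  simp_rw [e]
  rw [lintegral_iSup (em g) (mono g)]
  refine iSup_le fun L => ?_
  simp_rw [NL_mul hη r q σ f g hg]
  refine (h L (2^L) (70 * M + 1) (fun ℓ => tau σ ℓ) (fun ℓ => cf η r f ℓ) hV
    (fun ℓ => tau_supp σ ℓ (2^L) (pow_le_pow_right₀ (by norm_num) ℓ.2.le))
    (fun ℓ => cf_supp hη r f ℓ (2^L) (pow_le_pow_right₀ (by norm_num) ℓ.2.le))
    (fun ℓ => tau_var σ M hσ ℓ _)).trans ?_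
  refine mul_le_mul' (ENNReal.ofReal_le_ofReal (by gcongr; linarith)) (lintegral_mono fun x => ?_)
  exact le_iSup (fun L => ENNReal.ofReal (NL η r q f L x ^ p)) L

lemma weak_final {η : ℝ → ℝ} (hη : IsAdmissibleEta η) (M r q : ℝ) (hM : 0 ≤ M) (hq : 1 < q) :
    ∃ C : ℝ, 0 < C ∧ ∀ σ, MarcinkiewiczCondition σ M → ∀ f g : UnitAddCircle → ℂ,
      (∀ n, fourierCoeff g n = σ n * fourierCoeff f n) →
      torusWeakTlNorm η r q g ≤ ENNReal.ofReal C * torusTlNorm η r 1 q f := by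
  obtain ⟨C, hC, h⟩ := fin_weak q hq
  have hV : 0 < 70 * M + 1 := by positivity
  refine ⟨((C+1) * (70 * M + 1)), by positivity, fun σ hσ f g hg => ?_⟩
  unfold torusWeakTlNorm torusTlNorm
  refine iSup_le fun t => ?_
  rcases eq_or_ne t 0 with rfl | ht
  · simp
  have ht0 : 0 < (t:ℝ) := by exact_mod_cast pos_iff_ne_zero.2 ht
  simp only [ENNReal.rpow_one, div_one]
  have eS : {x | (t:ℝ≥0∞) < torusTlFn η r q g x} = ⋃ L, {x | (t:ℝ) < NL η r q g L x} := by
    ext x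
    simp only [Set.mem_ofPred_eq, Set.mem_iUnion]
    rw [Tl_eq hη r q hq, lt_iSup_iff]
    refine exists_congr fun L => ?_
    rw [← ENNReal.ofReal_coe_nnreal, ENNReal.ofReal_lt_ofReal_iff_of_nonneg t.coe_nonneg]
  have mono : Monotone (fun L => {x | (t:ℝ) < NL η r q g L x}) := by
    intro L L' hL x hx
    simp only [Set.mem_ofPred_eq] at hx ⊢
    refine hx.trans_le ?_
    exact (ENNReal.ofReal_le_ofReal_iff (Nq_nonneg _ _)).1 (NL_mono hη r q hq g x hL)
  rw [eS, mono.measure_iUnion, ENNReal.mul_iSup]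
  refine iSup_le fun L => ?_
  simp_rw [NL_mul hη r q σ f g hg]
  rw [← ENNReal.ofReal_coe_nnreal]
  refine (h L (2^L) (70 * M + 1) (fun ℓ => tau σ ℓ) (fun ℓ => cf η r f ℓ) hV
    (fun ℓ => tau_supp σ ℓ (2^L) (pow_le_pow_right₀ (by norm_num) ℓ.2.le))
    (fun ℓ => cf_supp hη r f ℓ (2^L) (pow_le_pow_right₀ (by norm_num) ℓ.2.le))
    (fun ℓ => tau_var σ M hσ ℓ _) t ht0).trans ?_
  refine mul_le_mul' (ENNReal.ofReal_le_ofReal (by gcongr; linarith)) (lintegral_mono fun x => ?_)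
  rw [Tl_eq hη r q hq]
  exact le_iSup (fun L => ENNReal.ofReal (NL η r q f L x)) L

end MTL

theorem marcinkiewicz_triebel_lizorkin_torus
    (η : ℝ → ℝ) (hη : IsAdmissibleEta η)
    (σ : ℤ → ℂ) (M : ℝ) (hσ : MarcinkiewiczCondition σ M) :
    (∀ r p q : ℝ, 1 < p → 1 < q → ∃ C : ℝ, 0 < C ∧ ∀ f : UnitAddCircle → ℂ,
        torusTlNorm η r p q (torusMul σ f) ≤ ENNReal.ofReal C * torusTlNorm η r p q f) ∧
    (∀ r q : ℝ, 1 < q → ∃ C : ℝ, 0 < C ∧ ∀ f : UnitAddCircle → ℂ,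
        torusWeakTlNorm η r q (torusMul σ f) ≤
          ENNReal.ofReal C * torusTlNorm η r 1 q f) := by
  have hM : 0 ≤ M := (norm_nonneg _).trans (hσ.1 0)
  constructor
  · intro r p q hp hq
    obtain ⟨C, hC, h⟩ := MTL.strong_final hη M r p q hM hp hq
    refine ⟨C, hC, fun f => ?_⟩
    rcases MTL.coeff_mul σ f with hc | hc
    · exact h σ hσ f _ hc
    · exact h 0 (MTL.zero_marc hσ) f _ (fun n => by simp [hc n])
  · intro r q hq
    obtain ⟨C, hC, h⟩ := MTL.weak_final hη M r q hM hq
    refine ⟨C, hC, fun f => ?_⟩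
    rcases MTL.coeff_mul σ f with hc | hc
    · exact h σ hσ f _ hc
    · exact h 0 (MTL.zero_marc hσ) f _ (fun n => by simp [hc n])
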